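/- arXiv:1805.02213 — 2 statements merged into one kernel-verified Lean document; each statement's English description precedes it below -/
import Mathlib

section
/- Let σ be an irreducible incommensurable multiscale substitution scheme in ℝ^d, let {π_m} be a Kakutani sequence of partitions of a prototile T_i ∈ τ_σ, and let 1 ≤ r ≤ n. Then, with q_h denoting the common entry in column h of the matrix Q_σ (all rows of Q_σ being equal and positive), the Lebesgue measure of the union of the tiles of type r in π_m converges, as m → ∞, to vol T_i · Σ_{h=1}^n q_h · Σ_{k=1}^{k_hr} (β_hr^(k))^d · log(1/β_hr^(k)). -/
/-!
Follow a random point of `T i` through successive substitutions. A tile of type `i` passes to a piece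
of type `j` with probability the relative volume `β ^ d`, and its linear size shrinks by the factor
`β`; with `log (1 / β)` as waiting time this is a Markov renewal process on the types. If `ℓ m` is the
largest volume of a tile of `π m`, then `π m` consists of the tiles of volume at most `ℓ m` whose
ancestors are all larger, whichever rules were chosen. So the relative volume of the tiles of type `r`
in `π m` is the probability `F i t` that the process is in state `r` when its elapsed time first
reaches `t = log (vol T i / ℓ m) / d`. Formally `F` is the solution of the renewal equation
`F i t = ∑ e, p e * F (tgt e) (t - s e)`, `t > 0`, with `F i t = 1` or `0` for `t ≤ 0` according to
whether `i = r`; the identity is `KakutaniData.sum_weighted`, and `ℓ m → 0` is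
`KakutaniData.tendsto_time`.

The limit of `F` is a renewal theorem, `RenewalSystem.exists_solution_tendsto`, proved as follows.
Incommensurability makes the lengths of paths between any two states eventually dense
(`exists_path_near`), so Lipschitz solutions of the renewal equation converge to a constant
(`tendsto_of_lipschitz`, a maximum argument). Integrals of `F` over a sliding window are Lipschitz
solutions, and an invariant weighted by a stationary vector `q` identifies their limits
(`tendsto_window`). Finally `F` oscillates little on short windows, because the probability that the
process visits a short window is asymptotically small (`exists_overshoot`).

The matrix `M_σ` is stochastic and irreducible. The maximum principle shows that the rows of
`adj (1 - M_σ)` are equal and positive (`adjugate_row_eq`, `adjugate_diag_pos`), they are stationary,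
and the trace in the denominator of `Q_σ` normalises them to mean waiting time one, so the rows of
`Q_σ` are the vector `q`.
-/

open MeasureTheory Filter Topology
open scoped Pointwise

noncomputable section

/-- Euclidean space `ℝ^d`. -/
abbrev Euc (d : ℕ) : Type := EuclideanSpace ℝ (Fin d)

/-- A tile in `ℝ^d`: a bounded Lebesgue measurable set of positive measure whose
boundary has measure zero. -/
def IsTile {d : ℕ} (T : Set (Euc d)) : Prop :=
  Bornology.IsBounded T ∧ NullMeasurableSet T volume ∧ 0 < volume T ∧
    volume (frontier T) = 0

/-- A multiscale substitution scheme in `ℝ^d` on `n` prototiles `T 1, …, T n`,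
with `numSub i j` substitution tiles of type `j` in `ω(T i)`, scaling constants
`scale i j k`, constants of substitution
`β_ij^(k) = (vol T_j / vol T_i)^(1/d) · α_ij^(k) ∈ (0,1)`, and a nonempty family
of substitution rules, each rule assigning to every prototile `T i` a partition of
`T i` into sets isometric to the substitution tiles `scale i j k • T j`. -/
structure MSScheme (d n : ℕ) where
  T : Fin n → Set (Euc d)
  tile : ∀ i, IsTile (T i)
  numSub : Fin n → Fin n → ℕ
  scale : (i j : Fin n) → Fin (numSub i j) → ℝ
  scale_pos : ∀ i j k, 0 < scale i j k
  beta_pos : ∀ i j k,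
    0 < ((volume (T j)).toReal / (volume (T i)).toReal) ^ (1 / (d : ℝ)) * scale i j k
  beta_lt_one : ∀ i j k,
    ((volume (T j)).toReal / (volume (T i)).toReal) ^ (1 / (d : ℝ)) * scale i j k < 1
  rules : Set ((i j : Fin n) → Fin (numSub i j) → Set (Euc d))
  rules_nonempty : rules.Nonempty
  rules_iso : ∀ ϱ ∈ rules, ∀ i j k, ∃ φ : Euc d ≃ᵢ Euc d,
    ϱ i j k = φ '' (scale i j k • T j)
  rules_disjoint : ∀ ϱ ∈ rules, ∀ i : Fin n, ∀ p q : Σ j : Fin n, Fin (numSub i j),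
    p ≠ q → Disjoint (interior (ϱ i p.1 p.2)) (interior (ϱ i q.1 q.2))
  rules_cover : ∀ ϱ ∈ rules, ∀ i : Fin n,
    (⋃ p : Σ j : Fin n, Fin (numSub i j), ϱ i p.1 p.2) = T i

/-- The constants of substitution `β_ij^(k) = (vol T_j / vol T_i)^(1/d) · α_ij^(k)`. -/
def MSScheme.beta {d n : ℕ} (σ : MSScheme d n) (i j : Fin n)
    (k : Fin (σ.numSub i j)) : ℝ :=
  ((volume (σ.T j)).toReal / (volume (σ.T i)).toReal) ^ (1 / (d : ℝ)) * σ.scale i j k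

/-- A labeled tile: a subset of `ℝ^d` together with a type label. -/
structure LTile (d n : ℕ) where
  carrier : Set (Euc d)
  type : Fin n

noncomputable instance {d n : ℕ} : DecidableEq (LTile d n) := Classical.decEq _

/-- `SubstitutesTo σ S P` : the labeled tile `S`, a rescaled isometric copy
`φ (a • T_{type S})` of the prototile of its type, is partitioned by the collection
`P` obtained by applying some substitution rule of the scheme,
`ϱ(a·φ(T_i)) = a·φ(ϱ(T_i))`, with the types of the pieces given by the scheme. -/
def SubstitutesTo {d n : ℕ} (σ : MSScheme d n) (S : LTile d n)
    (P : Finset (LTile d n)) : Prop :=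
  ∃ ϱ ∈ σ.rules, ∃ a : ℝ, 0 < a ∧ ∃ φ : Euc d ≃ᵢ Euc d,
    S.carrier = φ '' (a • σ.T S.type) ∧
    P = Finset.image
      (fun p : Σ j : Fin n, Fin (σ.numSub S.type j) =>
        (⟨φ '' (a • ϱ S.type p.1 p.2), p.1⟩ : LTile d n)) Finset.univ

open Classical in
/-- The tiles of maximal volume in a partition. -/
def maxTiles {d n : ℕ} (P : Finset (LTile d n)) : Finset (LTile d n) :=
  P.filter fun S => ∀ S' ∈ P, volume S'.carrier ≤ volume S.carrier

/-- A Kakutani sequence of partitions of the prototile `T i`: start with the trivial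
partition, and at each step substitute exactly the tiles of maximal volume, each
according to an arbitrarily and independently chosen substitution rule. -/
def IsKakutaniSeq {d n : ℕ} (σ : MSScheme d n) (i : Fin n)
    (π : ℕ → Finset (LTile d n)) : Prop :=
  π 0 = {(⟨σ.T i, i⟩ : LTile d n)} ∧
  ∀ m, ∃ repl : LTile d n → Finset (LTile d n),
    (∀ S ∈ maxTiles (π m), SubstitutesTo σ S (repl S)) ∧
    π (m + 1) = (π m \ maxTiles (π m)) ∪ (maxTiles (π m)).biUnion repl

/-- A generation sequence of partitions of the prototile `T i`: start with the trivial
partition, and at each step substitute all tiles, each according to an arbitrarily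
and independently chosen substitution rule. -/
def IsGenSeq {d n : ℕ} (σ : MSScheme d n) (i : Fin n)
    (δ : ℕ → Finset (LTile d n)) : Prop :=
  δ 0 = {(⟨σ.T i, i⟩ : LTile d n)} ∧
  ∀ m, ∃ repl : LTile d n → Finset (LTile d n),
    (∀ S ∈ δ m, SubstitutesTo σ S (repl S)) ∧
    δ (m + 1) = (δ m).biUnion repl

/-- A marking sequence of a sequence of partitions of `U`: finite sets of (distinct)
points of `U` such that every tile of the `m`-th partition contains exactly one point
of `x m`. -/
def IsMarking {d n : ℕ} (U : Set (Euc d)) (γ : ℕ → Finset (LTile d n))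
    (x : ℕ → Finset (Euc d)) : Prop :=
  ∀ m, (↑(x m) : Set (Euc d)) ⊆ U ∧
    ∀ S ∈ γ m, ∃! p, p ∈ x m ∧ p ∈ S.carrier

/-- An `r`-marking sequence: finite sets of (distinct) points of `U` such that every
tile of type `r` of the `m`-th partition contains exactly one point of `x m`, and
every point of `x m` lies in a tile of type `r`. -/
def IsRMarking {d n : ℕ} (U : Set (Euc d)) (γ : ℕ → Finset (LTile d n))
    (r : Fin n) (x : ℕ → Finset (Euc d)) : Prop :=
  ∀ m, (↑(x m) : Set (Euc d)) ⊆ U ∧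
    (∀ S ∈ γ m, S.type = r → ∃! p, p ∈ x m ∧ p ∈ S.carrier) ∧
    ∀ p ∈ x m, ∃ S ∈ γ m, S.type = r ∧ p ∈ S.carrier

/-- A sequence of finite sets of points is uniformly distributed in `U` if the
normalized sampling averages of every continuous function converge to its
normalized Lebesgue integral over `U`. -/
def MarkingUD {d : ℕ} (U : Set (Euc d)) (x : ℕ → Finset (Euc d)) : Prop :=
  ∀ f : Euc d → ℝ, ContinuousOn f U →
    Tendsto (fun m => (∑ p ∈ x m, f p) / ((x m).card : ℝ)) atTop
      (𝓝 ((∫ t in U, f t) / (volume U).toReal))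

/-- Irreducibility: every type `j` is produced from every prototile `T i` by some
finite (positive) number of substitutions. -/
def MSScheme.Irreducible {d n : ℕ} (σ : MSScheme d n) : Prop :=
  ∀ i j : Fin n, Relation.TransGen (fun a b => 0 < σ.numSub a b) i j

/-- `σ.IsClosedPathLogVol i a` : some tile of type `i` produced from `T i` by finitely
many substitutions has `log (vol T' / vol T_i) = a`; equivalently, `a` is the sum of
`log ((β_ij^(k))^d)` along some closed path from `i` to `i` in the associated graph. -/
def MSScheme.IsClosedPathLogVol {d n : ℕ} (σ : MSScheme d n)
    (i : Fin n) (a : ℝ) : Prop :=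
  ∃ m : ℕ, 0 < m ∧ ∃ p : Fin (m + 1) → Fin n, p 0 = i ∧ p (Fin.last m) = i ∧
    ∃ e : (t : Fin m) → Fin (σ.numSub (p t.castSucc) (p t.succ)),
      a = ∑ t : Fin m, Real.log (σ.beta (p t.castSucc) (p t.succ) (e t) ^ d)

/-- Incommensurability: there are tiles `T'` of type `i` produced from `T i` and `T''`
of type `j` produced from `T j` with `log (vol T' / vol T_i)` not a rational multiple
of `log (vol T'' / vol T_j)`. -/
def MSScheme.Incommensurable {d n : ℕ} (σ : MSScheme d n) : Prop :=
  ∃ (i j : Fin n) (a b : ℝ), σ.IsClosedPathLogVol i a ∧ σ.IsClosedPathLogVol j b ∧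
    ∀ q : ℚ, a ≠ (q : ℝ) * b

/-- The matrix `(M_σ)_ij = Σ_k (β_ij^(k))^d`. -/
def Mmat {d n : ℕ} (σ : MSScheme d n) : Matrix (Fin n) (Fin n) ℝ :=
  Matrix.of fun i j => ∑ k : Fin (σ.numSub i j), σ.beta i j k ^ d

/-- The matrix `(M'_σ)_ij = Σ_k (β_ij^(k))^d · log β_ij^(k)`. -/
def M'mat {d n : ℕ} (σ : MSScheme d n) : Matrix (Fin n) (Fin n) ℝ :=
  Matrix.of fun i j => ∑ k : Fin (σ.numSub i j), σ.beta i j k ^ d * Real.log (σ.beta i j k)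

/-- `Q_σ = adj (I − M_σ) / (− tr (adj (I − M_σ) · M'_σ))`. -/
def Qmat {d n : ℕ} (σ : MSScheme d n) : Matrix (Fin n) (Fin n) ℝ :=
  (-(Matrix.trace ((1 - Mmat σ).adjugate * M'mat σ)))⁻¹ • (1 - Mmat σ).adjugate

/-- The number of tiles of type `r` in a partition. -/
def countType {d n : ℕ} (P : Finset (LTile d n)) (r : Fin n) : ℕ :=
  (P.filter fun S => S.type = r).card

/-- The union of the tiles of type `r` in a partition. -/
def typeUnion {d n : ℕ} (P : Finset (LTile d n)) (r : Fin n) : Set (Euc d) :=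
  ⋃ S ∈ P.filter (fun S => S.type = r), S.carrier

/-- A fixed scale scheme: all scaling constants equal the contraction constant `α`. -/
def MSScheme.FixedScale {d n : ℕ} (σ : MSScheme d n) (α : ℝ) : Prop :=
  α ∈ Set.Ioo (0 : ℝ) 1 ∧ ∀ i j k, σ.scale i j k = α

/-- The substitution matrix `S_ij = k_ij` (as a real matrix). -/
def Smat {d n : ℕ} (σ : MSScheme d n) : Matrix (Fin n) (Fin n) ℝ :=
  Matrix.of fun i j => (σ.numSub i j : ℝ)

/-- A primitive scheme: some power of the substitution matrix is entrywise positive. -/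
def MSScheme.Primitive {d n : ℕ} (σ : MSScheme d n) : Prop :=
  ∃ k : ℕ, ∀ i j, 0 < (Smat σ ^ k) i j

end

/-! ### Renewal systems and the renewal equation -/

/-- A Markov renewal system on the state space `ι`: from state `i` one of the finitely many edges
`e : E i` is chosen with probability `p i e`, and leads to the state `tgt i e` after the waiting
time `s i e`. -/
structure RenewalSystem (ι : Type) where
  E : ι → Type
  fin : ∀ i, Fintype (E i)
  tgt : ∀ i, E i → ι
  p : ∀ i, E i → ℝ
  s : ∀ i, E i → ℝ
  p_pos : ∀ i e, 0 < p i e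
  p_sum : ∀ i, ∑ e, p i e = 1
  s_pos : ∀ i e, 0 < s i e

attribute [instance] RenewalSystem.fin

namespace RenewalSystem

variable {ι : Type} (R : RenewalSystem ι)

/-- `R.Path i j x`: some nonempty path from `i` to `j` has total length `x`. -/
inductive Path (R : RenewalSystem ι) : ι → ι → ℝ → Prop
  | single (i j : ι) (e : R.E i) (h : R.tgt i e = j) : Path R i j (R.s i e)
  | cons (i j : ι) (x : ℝ) (e : R.E i) (h : Path R (R.tgt i e) j x) : Path R i j (R.s i e + x)

/-- The homogeneous renewal equation at time `t`: conditioning on the first edge, `G i t` is the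
mean of the values of `G` at the state reached and the remaining time. -/
def HomAt (G : ι → ℝ → ℝ) (t : ℝ) : Prop :=
  ∀ i, G i t = ∑ e, R.p i e * G (R.tgt i e) (t - R.s i e)

lemma Path.trans {R : RenewalSystem ι} {i j k : ι} {x y : ℝ} (h : R.Path i j x) :
    R.Path j k y → R.Path i k (x + y) := by
  intro h2
  induction h with
  | single i j e h => subst h; exact Path.cons _ _ _ e h2
  | cons i j x e h ih => rw [add_assoc]; exact Path.cons _ _ _ e (ih h2)

lemma Path.pos {R : RenewalSystem ι} {i j : ι} {x : ℝ} (h : R.Path i j x) : 0 < x := by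
  induction h with
  | single i j e h => exact R.s_pos i e
  | cons i j x e h ih => exact add_pos (R.s_pos i e) ih

lemma Path.nsmul_add {R : RenewalSystem ι} {i j : ι} {a x : ℝ} (ha : R.Path i i a)
    (hx : R.Path i j x) (m : ℕ) : R.Path i j (m * a + x) := by
  induction m with
  | zero => simpa using hx
  | succ m ih =>
    have := ha.trans ih
    convert this using 1
    push_cast; ring

lemma exists_bounds [Fintype ι] : ∃ δ S : ℝ, 0 < δ ∧ 0 < S ∧ ∀ i e, δ ≤ R.s i e ∧ R.s i e ≤ S := by
  obtain ⟨S, hS⟩ := (Set.finite_range (fun q : Σ i, R.E i => R.s q.1 q.2)).bddAbove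
  obtain ⟨D, hD⟩ := (Set.finite_range (fun q : Σ i, R.E i => (R.s q.1 q.2)⁻¹)).bddAbove
  refine ⟨(max D 1)⁻¹, max S 1, by positivity, by positivity, fun i e => ⟨?_, ?_⟩⟩
  · have h1 : (R.s i e)⁻¹ ≤ max D 1 := le_max_of_le_left (hD ⟨⟨i, e⟩, rfl⟩)
    exact inv_le_of_inv_le₀ (R.s_pos i e) h1
  · exact le_max_of_le_left (hS ⟨⟨i, e⟩, rfl⟩)

/-- Comparison principle: nonnegativity on a window as long as the largest waiting time propagates
to all later times, because the renewal equation averages over earlier values. -/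
lemma nonneg_of_window [Fintype ι] {H : ι → ℝ → ℝ} {t₀ S : ℝ} (hS : ∀ i e, R.s i e ≤ S)
    (h0 : ∀ t, t₀ - S ≤ t → t ≤ t₀ → ∀ i, 0 ≤ H i t)
    (h1 : ∀ t, t₀ < t → R.HomAt H t) :
    ∀ t, t₀ - S ≤ t → ∀ i, 0 ≤ H i t := by
  obtain ⟨δ, _, hδ, _, hb⟩ := R.exists_bounds
  have key : ∀ N : ℕ, ∀ t, t₀ - S ≤ t → t ≤ t₀ + N * δ → ∀ i, 0 ≤ H i t := by
    intro N
    induction N with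
    | zero => intro t h h' i; exact h0 t h (by simpa using h') i
    | succ N ih =>
      intro t h h' i
      by_cases ht : t ≤ t₀
      · exact h0 t h ht i
      · push Not at ht
        rw [h1 t ht i]
        refine Finset.sum_nonneg fun e _ => mul_nonneg (R.p_pos i e).le (ih _ ?_ ?_ _)
        · linarith [hS i e]
        · have := (hb i e).1
          push_cast at h'
          linarith
  intro t ht i
  obtain ⟨N, hN⟩ := exists_nat_ge ((t - t₀) / δ)
  exact key N t ht (by rw [div_le_iff₀ hδ] at hN; linarith) i

lemma HomAt.sub {R : RenewalSystem ι} {G H : ι → ℝ → ℝ} {t : ℝ} (hG : R.HomAt G t)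
    (hH : R.HomAt H t) : R.HomAt (fun i t => G i t - H i t) t := by
  intro i
  simp only [hG i, hH i, ← Finset.sum_sub_distrib, mul_sub]

lemma homAt_const (c t : ℝ) : R.HomAt (fun _ _ => c) t := by
  intro i
  simp only [← Finset.sum_mul, R.p_sum, one_mul]

lemma le_of_window [Fintype ι] {G H : ι → ℝ → ℝ} {t₀ S : ℝ} (hS : ∀ i e, R.s i e ≤ S)
    (h0 : ∀ t, t₀ - S ≤ t → t ≤ t₀ → ∀ i, G i t ≤ H i t)
    (hG : ∀ t, t₀ < t → R.HomAt G t) (hH : ∀ t, t₀ < t → R.HomAt H t) :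
    ∀ t, t₀ - S ≤ t → ∀ i, G i t ≤ H i t := by
  intro t ht i
  have := R.nonneg_of_window (H := fun i t => H i t - G i t) hS
    (fun t h h' i => sub_nonneg.2 (h0 t h h' i)) (fun t h => (hH t h).sub (hG t h)) t ht i
  exact sub_nonneg.1 this

/-- The renewal equation has a solution for positive times with prescribed measurable past `f`.
Iterating the equation `N` times determines it up to time `N * δ`, where `δ` is the smallest
waiting time. -/
lemma exists_solution [Fintype ι] (f : ι → ℝ → ℝ) (hf : ∀ i, Measurable (f i))
    (hf01 : ∀ i t, 0 ≤ f i t ∧ f i t ≤ 1) :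
    ∃ F : ι → ℝ → ℝ, (∀ i, Measurable (F i)) ∧ (∀ i t, 0 ≤ F i t ∧ F i t ≤ 1) ∧
      (∀ i t, t ≤ 0 → F i t = f i t) ∧ ∀ t, 0 < t → R.HomAt F t := by
  obtain ⟨δ, _, hδ, _, hb⟩ := R.exists_bounds
  let s : ℕ → ι → ℝ → ℝ := fun N => Nat.rec f (fun _ g i t =>
    if t ≤ 0 then f i t else ∑ e, R.p i e * g (R.tgt i e) (t - R.s i e)) N
  have s0 : s 0 = f := rfl
  have s1 : ∀ N i t, s (N + 1) i t =
    if t ≤ 0 then f i t else ∑ e, R.p i e * s N (R.tgt i e) (t - R.s i e) := fun _ _ _ => rfl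
  have hstep : ∀ N : ℕ, ∀ i t, t ≤ N * δ → s (N + 1) i t = s N i t := by
    intro N
    induction N with
    | zero => intro i t h; rw [s1, s0, if_pos (by simpa using h)]
    | succ N ih =>
      intro i t h
      rw [s1 (N + 1), s1 N]
      split_ifs with h0
      · rfl
      · refine Finset.sum_congr rfl fun e _ => ?_
        rw [ih]
        have := (hb i e).1
        push_cast at h
        linarith
  have hstable : ∀ N : ℕ, ∀ i t, t ≤ N * δ → ∀ k, s (N + k) i t = s N i t := by
    intro N i t h k
    induction k with
    | zero => rfl
    | succ k ih =>
      rw [← add_assoc, hstep, ih]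
      push_cast
      nlinarith [(Nat.cast_nonneg k : (0:ℝ) ≤ k)]
  have hmeas : ∀ N i, Measurable (s N i) := by
    intro N
    induction N with
    | zero => exact hf
    | succ N ih =>
      intro i
      refine Measurable.ite measurableSet_Iic (hf i) ?_
      refine Finset.measurable_sum _ fun e _ => ?_
      exact ((ih _).comp (measurable_id.sub_const _)).const_mul _
  have hs01 : ∀ N i t, 0 ≤ s N i t ∧ s N i t ≤ 1 := by
    intro N
    induction N with
    | zero => exact hf01
    | succ N ih =>
      intro i t
      rw [s1]
      split_ifs
      · exact hf01 i t
      · refine ⟨Finset.sum_nonneg fun e _ => mul_nonneg (R.p_pos i e).le (ih _ _).1, ?_⟩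
        rw [← R.p_sum i]
        exact Finset.sum_le_sum fun e _ => mul_le_of_le_one_right (R.p_pos i e).le (ih _ _).2
  let F : ι → ℝ → ℝ := fun i t => s ⌈t / δ⌉₊ i t
  have hF : ∀ N : ℕ, ∀ i t, t ≤ N * δ → s N i t = F i t := by
    intro N i t h
    have h1 : ⌈t / δ⌉₊ ≤ N := Nat.ceil_le.2 (by rwa [div_le_iff₀ hδ])
    obtain ⟨k, rfl⟩ := Nat.exists_eq_add_of_le h1
    refine hstable _ i t ?_ k
    rw [← div_le_iff₀ hδ]; exact Nat.le_ceil _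
  refine ⟨F, fun i => ?_, fun i t => hs01 _ i t, fun i t ht => ?_, fun t ht i => ?_⟩
  · refine measurable_of_tendsto_metrizable (f := fun N => s N i) (fun N => hmeas N i) ?_
    rw [tendsto_pi_nhds]
    intro t
    refine tendsto_const_nhds.congr' ?_
    filter_upwards [eventually_ge_atTop ⌈t / δ⌉₊] with N hN
    refine (hF N i t ?_).symm
    rw [← div_le_iff₀ hδ]; exact (Nat.le_ceil _).trans (by exact_mod_cast hN)
  · rw [← hF 0 i t (by simpa using ht), s0]
  · obtain ⟨N, hN⟩ := exists_nat_ge (t / δ)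
    rw [div_le_iff₀ hδ] at hN
    rw [← hF (N + 1) i t (by push_cast; linarith), s1, if_neg (not_le.2 ht)]
    refine Finset.sum_congr rfl fun e _ => ?_
    rw [hF]
    linarith [R.s_pos i e]

/-! ### Convergence of Lipschitz solutions -/

/-- Path lengths from `i` to `j` are eventually `ε`-dense in the half line: from a long
concatenation of the loop `u`, replacing copies of `u` by the slightly longer `v` moves the total
length in steps smaller than `ε`. -/
lemma exists_path_near (hirr : ∀ i j, ∃ x, R.Path i j x)
    (hloop : ∀ i, ∀ ε > 0, ∃ u v, R.Path i i u ∧ R.Path i i v ∧ u < v ∧ v < u + ε)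
    (i j : ι) {ε : ℝ} (hε : 0 < ε) :
    ∃ L, ∀ x, L ≤ x → ∃ y, R.Path i j y ∧ |y - x| < ε := by
  obtain ⟨u, v, hu, hv, huv, hvu⟩ := hloop i ε hε
  obtain ⟨c, hc⟩ := hirr i j
  have hu0 := hu.pos
  have hδ : 0 < v - u := sub_pos.2 huv
  obtain ⟨N, hN⟩ := exists_nat_ge (u / (v - u))
  refine ⟨c + N * u, fun x hx => ?_⟩
  have hz : 0 ≤ (x - c) / u := by
    apply div_nonneg _ hu0.le
    nlinarith [(Nat.cast_nonneg N : (0:ℝ) ≤ N)]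
  -- `n` copies of `u` bring the total just below `x`; trading `k` of them for `v` fills the gap.
  set n := ⌊(x - c) / u⌋₊ with hn
  have hn1 : (n : ℝ) * u ≤ x - c := by
    rw [← le_div_iff₀ hu0]; exact Nat.floor_le hz
  have hn2 : x - c < (n + 1) * u := by
    rw [← div_lt_iff₀ hu0]; exact Nat.lt_floor_add_one _
  have hw : 0 ≤ (x - c - n * u) / (v - u) := div_nonneg (by linarith) hδ.le
  set k := ⌊(x - c - n * u) / (v - u)⌋₊ with hk
  have hk1 : (k : ℝ) * (v - u) ≤ x - c - n * u := by
    rw [← le_div_iff₀ hδ]; exact Nat.floor_le hw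
  have hk2 : x - c - n * u < (k + 1) * (v - u) := by
    rw [← div_lt_iff₀ hδ]; exact Nat.lt_floor_add_one _
  have hNn : N ≤ n := by
    apply Nat.le_floor
    rw [le_div_iff₀ hu0]; linarith
  have hkN : k ≤ N := by
    have : (k : ℝ) ≤ N := by
      refine le_trans ?_ hN
      rw [le_div_iff₀ hδ]; linarith
    exact_mod_cast this
  obtain ⟨l, hl⟩ := Nat.exists_eq_add_of_le (hkN.trans hNn)
  have hl' : (n : ℝ) = k + l := by exact_mod_cast hl
  refine ⟨k * v + (l * u + c), hv.nsmul_add (hu.nsmul_add hc l) k, ?_⟩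
  rw [hl'] at hk1 hk2
  rw [abs_lt]
  constructor <;> nlinarith

/-- If a convex combination with positive weights converges to an asymptotic upper bound `M` of
all its terms, then each term converges to `M`. -/
lemma tendsto_of_convex_sum {E : Type} [Fintype E] {p : E → ℝ} (hp : ∀ e, 0 < p e)
    (hp1 : ∑ e, p e = 1) {M : ℝ} {x : E → ℕ → ℝ}
    (hx : ∀ e, ∀ η > 0, ∀ᶠ n in atTop, x e n ≤ M + η)
    (hsum : Tendsto (fun n => ∑ e, p e * x e n) atTop (𝓝 M)) (e : E) :
    Tendsto (x e) atTop (𝓝 M) := by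
  classical
  rw [Metric.tendsto_atTop']
  intro ε hε
  have hη : 0 < ε * p e / 2 := by have := hp e; positivity
  have h1 : ∀ᶠ n in atTop, ∀ e', x e' n ≤ M + ε * p e / 2 :=
    eventually_all.2 fun e' => hx e' _ hη
  have h2 := hsum.eventually (lt_mem_nhds (show M - ε * p e / 2 < M by linarith))
  have h3 := hx e (ε / 2) (by linarith)
  obtain ⟨N, hN⟩ := eventually_atTop.1 (h1.and (h2.and h3))
  refine ⟨N, fun n hn => ?_⟩
  obtain ⟨a1, a2, a3⟩ := hN n hn.le
  rw [Real.dist_eq, abs_lt]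
  refine ⟨?_, by linarith⟩
  have h4 : ∑ e', p e' * (M + ε * p e / 2 - x e' n) ≥ p e * (M + ε * p e / 2 - x e n) :=
    Finset.single_le_sum (f := fun e' => p e' * (M + ε * p e / 2 - x e' n))
      (fun e' _ => mul_nonneg (hp e').le (sub_nonneg.2 (a1 e'))) (Finset.mem_univ e)
  simp only [mul_sub, Finset.sum_sub_distrib, ← Finset.sum_mul, hp1, one_mul] at h4
  have h5 : p e * (M + ε * p e / 2 - x e n) < p e * ε := by rw [mul_sub]; linarith
  have h6 := lt_of_mul_lt_mul_left h5 (hp e).le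
  linarith

/-- A bounded, uniformly Lipschitz solution of the renewal equation converges, to a limit that is
the same for all states. Let `M` be the upper limit. Along times `τ n` where `M` is almost attained,
averaging forces all values at earlier times `τ n - x`, `x` a path length, to be close to `M` too.
Path lengths being eventually dense, this covers a whole window up to the Lipschitz error, and by
comparison the solution stays close to `M` afterwards. -/
lemma tendsto_of_lipschitz [Fintype ι] [Nonempty ι] (hirr : ∀ i j, ∃ x, R.Path i j x)
    (hloop : ∀ i, ∀ ε > 0, ∃ u v, R.Path i i u ∧ R.Path i i v ∧ u < v ∧ v < u + ε)
    {G : ι → ℝ → ℝ} {B K t₀ : ℝ} (hB : ∀ i t, |G i t| ≤ B)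
    (hK : 0 < K) (hLip : ∀ i t t', |G i t - G i t'| ≤ K * |t - t'|)
    (hG : ∀ t, t₀ < t → R.HomAt G t) :
    ∃ M, ∀ i, Tendsto (G i) atTop (𝓝 M) := by
  obtain ⟨δ, S, hδ, hS, hb⟩ := R.exists_bounds
  let A : Set ℝ := {c | ∃ T, ∀ t, T ≤ t → ∀ i, G i t ≤ c}
  have hAne : A.Nonempty := ⟨B, 0, fun t _ i => (abs_le.1 (hB i t)).2⟩
  have hAbd : BddBelow A := by
    refine ⟨-B, fun c ⟨T, hT⟩ => ?_⟩
    exact (abs_le.1 (hB (Classical.arbitrary ι) T)).1.trans (hT T le_rfl _)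
  set M := sInf A with hM
  have hup : ∀ η > 0, ∀ᶠ t in atTop, ∀ i, G i t ≤ M + η := by
    intro η hη
    obtain ⟨c, ⟨T, hT⟩, hc⟩ := exists_lt_of_csInf_lt hAne (show sInf A < M + η by linarith)
    filter_upwards [eventually_ge_atTop T] with t ht i
    exact (hT t ht i).trans hc.le
  -- By finiteness of the state space, one state `i₀` almost attains `M` at arbitrarily late times.
  have hex : ∃ i, ∀ n : ℕ, ∃ t, (n : ℝ) ≤ t ∧ M - 1 / ((n : ℝ) + 1) < G i t := by
    by_contra hcon
    push Not at hcon
    choose N hN using hcon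
    obtain ⟨m, hm⟩ := (Set.finite_range N).bddAbove
    have : M - 1 / ((m : ℝ) + 1) ∈ A := by
      refine ⟨m, fun t ht i => ?_⟩
      have hNm : N i ≤ m := hm ⟨i, rfl⟩
      have hNm' : (N i : ℝ) ≤ m := by exact_mod_cast hNm
      refine (hN i t (hNm'.trans ht)).trans ?_
      gcongr
    have h1 := csInf_le hAbd this
    have : 0 < 1 / ((m : ℝ) + 1) := by positivity
    linarith
  obtain ⟨i₀, hi₀⟩ := hex
  choose τ hτ1 hτ2 using hi₀
  have hτ : Tendsto τ atTop atTop := tendsto_atTop_mono hτ1 tendsto_natCast_atTop_atTop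
  have hτ' : ∀ x : ℝ, Tendsto (fun n => τ n - x) atTop atTop := fun x =>
    tendsto_atTop_add_const_right _ (-x) hτ
  have hlim0 : Tendsto (fun n => G i₀ (τ n)) atTop (𝓝 M) := by
    rw [Metric.tendsto_atTop']
    intro ε hε
    have h1 := hτ.eventually (hup (ε / 2) (by linarith))
    have h2 := (tendsto_one_div_add_atTop_nhds_zero_nat (𝕜 := ℝ)).eventually (gt_mem_nhds hε)
    obtain ⟨N, hN⟩ := eventually_atTop.1 (h1.and h2)
    refine ⟨N, fun n hn => ?_⟩
    obtain ⟨a1, a2⟩ := hN n hn.le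
    have a3 := a1 i₀
    rw [Real.dist_eq, abs_lt]
    constructor <;> linarith [hτ2 n]
  -- The near-maximality spreads backwards along all paths.
  have hback : ∀ i j x, R.Path i j x → ∀ y : ℝ,
      Tendsto (fun n => G i (τ n - y)) atTop (𝓝 M) →
      Tendsto (fun n => G j (τ n - y - x)) atTop (𝓝 M) := by
    have hone : ∀ i (e : R.E i) (y : ℝ), Tendsto (fun n => G i (τ n - y)) atTop (𝓝 M) →
        Tendsto (fun n => G (R.tgt i e) (τ n - y - R.s i e)) atTop (𝓝 M) := by
      intro i e y hy
      refine tendsto_of_convex_sum (x := fun e n => G (R.tgt i e) (τ n - y - R.s i e))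
        (R.p_pos i) (R.p_sum i) (fun e η hη => ?_) ?_ e
      · have := (hτ' (y + R.s i e)).eventually (hup η hη)
        filter_upwards [this] with n hn
        simpa [sub_sub] using hn (R.tgt i e)
      · refine hy.congr' ?_
        filter_upwards [(hτ' y).eventually (eventually_gt_atTop t₀)] with n hn
        exact hG _ hn i
    intro i j x h
    induction h with
    | single i j e h => subst h; exact hone i e
    | cons i j x e h ih =>
      intro y hy
      have := ih (y + R.s i e) (by simpa [sub_sub] using hone i e y hy)
      simpa [sub_sub, add_assoc] using this
  refine ⟨M, fun i => ?_⟩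
  rw [Metric.tendsto_nhds]
  intro ε hε
  have hr : 0 < ε / (4 * K) := by positivity
  set r := ε / (4 * K) with hrdef
  have hL : ∃ L, ∀ j, ∀ x, L ≤ x → ∃ y, R.Path i₀ j y ∧ |y - x| < r := by
    choose L hL using fun j => R.exists_path_near hirr hloop i₀ j hr
    obtain ⟨m, hm⟩ := (Set.finite_range L).bddAbove
    exact ⟨m, fun j x hx => hL j x ((hm ⟨j, rfl⟩).trans hx)⟩
  obtain ⟨L, hL⟩ := hL
  obtain ⟨m, hm⟩ := exists_nat_ge (S / r)
  have hgrid : ∀ (j : ι) (k : ℕ), ∃ y, R.Path i₀ j y ∧ |y - (L + k * r)| < r := fun j k =>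
    hL j _ (by have : 0 ≤ (k:ℝ) * r := by positivity
               linarith)
  choose y hy1 hy2 using hgrid
  have hev : ∀ᶠ n in atTop, ∀ j, ∀ k ∈ Finset.range (m + 1), M - ε / 4 < G j (τ n - y j k) := by
    rw [eventually_all]
    intro j
    rw [Filter.eventually_all_finset]
    intro k _
    have := hback i₀ j _ (hy1 j k) 0 (by simpa using hlim0)
    simp only [sub_zero] at this
    exact this.eventually (lt_mem_nhds (by linarith))
  obtain ⟨n, hn, hnt⟩ := (hev.and ((hτ' L).eventually (eventually_gt_atTop t₀))).exists
  have hwin : ∀ t, (τ n - L) - S ≤ t → t ≤ τ n - L → ∀ j, M - ε * (3 / 4) ≤ G j t := by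
    intro t h1 h2 j
    -- `L + k * r` is the grid point just below the delay `τ n - t`.
    have hz : 0 ≤ (τ n - L - t) / r := div_nonneg (by linarith) hr.le
    set k := ⌊(τ n - L - t) / r⌋₊ with hk
    have hk1 : (k : ℝ) * r ≤ τ n - L - t := by
      rw [← le_div_iff₀ hr]; exact Nat.floor_le hz
    have hk2 : τ n - L - t < (k + 1) * r := by
      rw [← div_lt_iff₀ hr]; exact Nat.lt_floor_add_one _
    have hkm : k ≤ m := by
      have : (k : ℝ) ≤ m := by
        refine le_trans ?_ hm
        rw [le_div_iff₀ hr]; linarith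
      exact_mod_cast this
    have h3 := hn j k (Finset.mem_range.2 (by omega))
    have h4 := hLip j (τ n - y j k) t
    have h5 := abs_lt.1 (hy2 j k)
    have h6 : |τ n - y j k - t| ≤ 2 * r := by
      rw [abs_le]; constructor <;> linarith
    have h7 : K * |τ n - y j k - t| ≤ ε / 2 := by
      calc K * |τ n - y j k - t| ≤ K * (2 * r) := by gcongr
        _ = ε / 2 := by rw [hrdef]; field_simp; norm_num
    have h8 := (abs_le.1 (h4.trans h7)).2
    linarith
  have hlow := R.le_of_window (G := fun _ _ => M - ε * (3 / 4)) (H := G) (t₀ := τ n - L)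
    (fun i e => (hb i e).2) hwin (fun t _ => R.homAt_const _ t) (fun t ht => hG t (hnt.trans ht))
  filter_upwards [hup (ε / 2) (by linarith), eventually_ge_atTop (τ n - L - S)] with t h1 h2
  have h3 := hlow t h2 i
  have h4 := h1 i
  rw [Real.dist_eq, abs_lt]
  constructor <;> linarith

/-! ### The renewal theorem -/

lemma intervalIntegrable_of_unit {g : ℝ → ℝ} (hg : Measurable g) (h01 : ∀ t, 0 ≤ g t ∧ g t ≤ 1)
    (a b : ℝ) : IntervalIntegrable g volume a b := by
  refine (intervalIntegrable_const (c := (1 : ℝ))).mono_fun hg.aestronglyMeasurable ?_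
  refine Eventually.of_forall fun t => ?_
  beta_reduce
  rw [Real.norm_of_nonneg (h01 t).1]
  simpa using (h01 t).2

lemma abs_integral_le_of_unit {g : ℝ → ℝ} (h01 : ∀ t, 0 ≤ g t ∧ g t ≤ 1)
    (a b : ℝ) : |∫ u in a..b, g u| ≤ |b - a| := by
  have := intervalIntegral.norm_integral_le_of_norm_le_const (a := a) (b := b) (f := g) (C := 1)
    (fun x _ => by rw [Real.norm_of_nonneg (h01 x).1]; exact (h01 x).2)
  simpa using this

lemma integral_homAt {F : ι → ℝ → ℝ} (hm : ∀ i, Measurable (F i))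
    (h01 : ∀ i t, 0 ≤ F i t ∧ F i t ≤ 1) (hF : ∀ t, 0 < t → R.HomAt F t) {a b : ℝ}
    (ha : 0 ≤ a) (hab : a ≤ b) (i : ι) :
    ∫ u in a..b, F i u =
      ∑ e, R.p i e * ∫ u in (a - R.s i e)..(b - R.s i e), F (R.tgt i e) u := by
  have h1 : ∫ u in a..b, F i u =
      ∫ u in a..b, ∑ e, R.p i e * F (R.tgt i e) (u - R.s i e) := by
    refine intervalIntegral.integral_congr_ae (Eventually.of_forall fun u hu => ?_)
    rw [Set.uIoc_of_le hab] at hu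
    exact hF u (ha.trans_lt hu.1) i
  rw [h1, intervalIntegral.integral_finsetSum]
  · refine Finset.sum_congr rfl fun e _ => ?_
    rw [intervalIntegral.integral_const_mul,
      intervalIntegral.integral_comp_sub_right (fun u => F (R.tgt i e) u)]
  · intro e _
    refine IntervalIntegrable.const_mul ?_ _
    exact intervalIntegrable_of_unit ((hm _).comp (measurable_id.sub_const _))
      (fun t => h01 _ _) _ _

/-- The integrals of a solution over a sliding window of length `h` converge, to a limit independent
of the state: they form a Lipschitz solution of the renewal equation. A negative `h`, for which the
integral is oriented, is allowed so that the limit can be shown to be additive in `h`. -/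
lemma exists_tendsto_window [Fintype ι] [Nonempty ι] (hirr : ∀ i j, ∃ x, R.Path i j x)
    (hloop : ∀ i, ∀ ε > 0, ∃ u v, R.Path i i u ∧ R.Path i i v ∧ u < v ∧ v < u + ε)
    {F : ι → ℝ → ℝ} (hm : ∀ i, Measurable (F i))
    (h01 : ∀ i t, 0 ≤ F i t ∧ F i t ≤ 1) (hF : ∀ t, 0 < t → R.HomAt F t) (h : ℝ) :
    ∃ M, ∀ i, Tendsto (fun t => ∫ u in (t - h)..t, F i u) atTop (𝓝 M) := by
  have hpos : ∀ h : ℝ, 0 < h →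
      ∃ M, ∀ i, Tendsto (fun t => ∫ u in (t - h)..t, F i u) atTop (𝓝 M) := by
    intro h hh
    refine R.tendsto_of_lipschitz hirr hloop (G := fun i t => ∫ u in (t - h)..t, F i u) (B := h)
      (K := 2) (t₀ := h) (fun i t => ?_) (by norm_num) (fun i t t' => ?_) (fun t ht i => ?_)
    · have := abs_integral_le_of_unit (h01 i) (t - h) t
      simpa [abs_of_pos hh] using this
    · have hIntg := fun a b => intervalIntegrable_of_unit (hm i) (h01 i) a b
      rw [intervalIntegral.integral_interval_sub_interval_comm (hIntg _ _) (hIntg _ _) (hIntg _ _)]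
      have e1 := abs_integral_le_of_unit (h01 i) (t - h) (t' - h)
      have e2 := abs_integral_le_of_unit (h01 i) t t'
      have e3 : |t' - h - (t - h)| = |t - t'| := by rw [abs_sub_comm t t']; congr 1; ring
      rw [e3] at e1
      rw [abs_sub_comm t' t] at e2
      have e1' := abs_le.1 e1
      have e2' := abs_le.1 e2
      rw [abs_le]
      constructor <;> linarith
    · dsimp only
      rw [R.integral_homAt hm h01 hF (by linarith) (by linarith) i]
      refine Finset.sum_congr rfl fun e _ => ?_
      rw [show t - R.s i e - h = t - h - R.s i e by ring]
  rcases lt_trichotomy h 0 with hh | rfl | hh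
  · obtain ⟨M, hM⟩ := hpos (-h) (by linarith)
    refine ⟨-M, fun i => ?_⟩
    have := ((hM i).comp (tendsto_atTop_add_const_right atTop (-h) tendsto_id)).neg
    refine this.congr fun t => ?_
    simp only [Function.comp, id]
    rw [intervalIntegral.integral_symm, neg_neg]
    congr 1
    ring
  · exact ⟨0, fun i => by simp⟩
  · exact hpos h hh

/-- The averaged renewal theorem, with explicit limit. The limit of the window integrals is additive
and bounded in the window length `h`, hence linear; its slope is found from the quantity
`∑ q i * p i e * ∫ F` over the windows of lengths `s i e`, which is constant in time because `q` is
stationary. -/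
lemma tendsto_window [Fintype ι] [Nonempty ι] (hirr : ∀ i j, ∃ x, R.Path i j x)
    (hloop : ∀ i, ∀ ε > 0, ∃ u v, R.Path i i u ∧ R.Path i i v ∧ u < v ∧ v < u + ε)
    {q : ι → ℝ} (hq : ∀ g : ι → ℝ, ∑ i, q i * ∑ e, R.p i e * g (R.tgt i e) = ∑ i, q i * g i)
    (hq1 : ∑ i, q i * ∑ e, R.p i e * R.s i e = 1)
    {F : ι → ℝ → ℝ} (hm : ∀ i, Measurable (F i))
    (h01 : ∀ i t, 0 ≤ F i t ∧ F i t ≤ 1) (hF : ∀ t, 0 < t → R.HomAt F t) (h : ℝ) (i : ι) :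
    Tendsto (fun t => ∫ u in (t - h)..t, F i u) atTop
      (𝓝 (h * ∑ i, q i * ∑ e, R.p i e * ∫ u in (-R.s i e)..0, F (R.tgt i e) u)) := by
  choose L hL using R.exists_tendsto_window hirr hloop hm h01 hF
  have hIntg := fun i a b => intervalIntegrable_of_unit (hm i) (h01 i) a b
  have hadd : ∀ x y, L (x + y) = L x + L y := by
    intro x y
    refine tendsto_nhds_unique (hL (x + y) i) ?_
    have h1 := (hL y i).comp (tendsto_atTop_add_const_right atTop (-x) tendsto_id)
    refine ((hL x i).add h1).congr fun t => ?_
    simp only [Function.comp, id]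
    rw [add_comm, ← sub_eq_add_neg, show t - x - y = t - (x + y) by ring]
    exact intervalIntegral.integral_add_adjacent_intervals (hIntg _ _ _) (hIntg _ _ _)
  have hbd : ∀ x, ‖L x‖ ≤ 1 * ‖x‖ := by
    intro x
    refine le_of_tendsto (hL x i).norm (Eventually.of_forall fun t => ?_)
    have := abs_integral_le_of_unit (h01 i) (t - x) t
    simpa using this
  let Lh : ℝ →+ ℝ := AddMonoidHom.mk' L hadd
  have hcont : Continuous Lh := AddMonoidHomClass.continuous_of_bound Lh 1 hbd
  have hlin : ∀ x, L x = x * L 1 := by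
    intro x
    have := (Lh.toRealLinearMap hcont).map_smul x 1
    simpa [Lh] using this
  -- The stationary average of the window integrals does not depend on time.
  have hcons : ∀ t, 0 ≤ t →
      ∑ i, q i * ∑ e, R.p i e * ∫ u in (t - R.s i e)..t, F (R.tgt i e) u =
      ∑ i, q i * ∑ e, R.p i e * ∫ u in (-R.s i e)..0, F (R.tgt i e) u := by
    intro t ht
    have e1 : ∀ i (e : R.E i), ∫ u in (t - R.s i e)..t, F (R.tgt i e) u =
        (∫ u in (-R.s i e)..0, F (R.tgt i e) u) + (∫ u in (0 : ℝ)..t, F (R.tgt i e) u)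
          - ∫ u in (0 - R.s i e)..(t - R.s i e), F (R.tgt i e) u := by
      intro i e
      have a1 := intervalIntegral.integral_add_adjacent_intervals
        (hIntg (R.tgt i e) (-R.s i e) 0) (hIntg (R.tgt i e) 0 t)
      have a2 := intervalIntegral.integral_add_adjacent_intervals
        (hIntg (R.tgt i e) (-R.s i e) (t - R.s i e)) (hIntg (R.tgt i e) (t - R.s i e) t)
      rw [zero_sub, a1, ← a2]; ring
    simp only [e1, mul_sub, mul_add, Finset.sum_sub_distrib, Finset.sum_add_distrib]
    rw [hq (fun j => ∫ u in (0 : ℝ)..t, F j u)]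
    simp only [← R.integral_homAt hm h01 hF le_rfl ht]
    ring
  have hconv : Tendsto (fun t => ∑ i, q i * ∑ e, R.p i e *
      ∫ u in (t - R.s i e)..t, F (R.tgt i e) u) atTop
      (𝓝 (∑ i, q i * ∑ e, R.p i e * L (R.s i e))) :=
    tendsto_finsetSum _ fun i _ => (tendsto_finsetSum _ fun e _ =>
      (hL _ _).const_mul _).const_mul _
  have hval : ∑ i, q i * ∑ e, R.p i e * L (R.s i e) = L 1 := by
    calc _ = (∑ i, q i * ∑ e, R.p i e * R.s i e) * L 1 := by
          rw [Finset.sum_mul]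
          refine Finset.sum_congr rfl fun i _ => ?_
          rw [mul_assoc, Finset.sum_mul]
          congr 1
          refine Finset.sum_congr rfl fun e _ => ?_
          rw [hlin (R.s i e), mul_assoc]
      _ = L 1 := by rw [hq1, one_mul]
  have hL1 : L 1 = ∑ i, q i * ∑ e, R.p i e * ∫ u in (-R.s i e)..0, F (R.tgt i e) u := by
    rw [← hval]
    refine tendsto_nhds_unique hconv (tendsto_const_nhds.congr' ?_)
    filter_upwards [eventually_ge_atTop 0] with t ht
    exact (hcons t ht).symm
  rw [← hL1, ← hlin]
  exact hL h i

/-- A solution `H` dominating the probability that the walk stops within distance `h` beyond its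
target level, which is asymptotically at most a multiple of `h`. Up to translations by at most `h`
it lies below the solution `G` for the window of length `2 * h`, to which the averaged renewal
theorem applies. -/
lemma exists_overshoot [Fintype ι] [Nonempty ι] (hirr : ∀ i j, ∃ x, R.Path i j x)
    (hloop : ∀ i, ∀ ε > 0, ∃ u v, R.Path i i u ∧ R.Path i i v ∧ u < v ∧ v < u + ε)
    {q : ι → ℝ} (hq0 : ∀ i, 0 ≤ q i)
    (hq : ∀ g : ι → ℝ, ∑ i, q i * ∑ e, R.p i e * g (R.tgt i e) = ∑ i, q i * g i)
    (hq1 : ∑ i, q i * ∑ e, R.p i e * R.s i e = 1) {h : ℝ} (hh : 0 < h) :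
    ∃ H : ι → ℝ → ℝ, (∀ t, 0 < t → R.HomAt H t) ∧ (∀ i t, 0 ≤ H i t) ∧
      (∀ i t, -h < t → t ≤ 0 → H i t = 1) ∧
      ∀ i, ∀ η > 0, ∀ᶠ t in atTop, H i t ≤ 2 * h * (∑ i, q i) + η := by
  classical
  have hsol : ∀ a : ℝ, ∃ F : ι → ℝ → ℝ, (∀ i, Measurable (F i)) ∧
      (∀ i t, 0 ≤ F i t ∧ F i t ≤ 1) ∧
      (∀ i t, t ≤ 0 → F i t = (Set.Ioc (-a) 0).indicator (fun _ => (1 : ℝ)) t) ∧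
      ∀ t, 0 < t → R.HomAt F t := fun a =>
    R.exists_solution (fun _ => (Set.Ioc (-a) 0).indicator fun _ => (1 : ℝ))
      (fun _ => measurable_const.indicator measurableSet_Ioc) (fun _ t => by
        by_cases ht : t ∈ Set.Ioc (-a) 0 <;> simp [ht])
  obtain ⟨H, Hm, H01, H0, Hhom⟩ := hsol h
  obtain ⟨G, Gm, G01, G0, Ghom⟩ := hsol (2 * h)
  obtain ⟨δ, S, hδ, hS, hb⟩ := R.exists_bounds
  refine ⟨H, Hhom, fun i t => (H01 i t).1, fun i t h1 h2 => ?_, fun i η hη => ?_⟩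
  · rw [H0 i t h2, Set.indicator_of_mem (Set.mem_Ioc.2 ⟨h1, h2⟩)]
  have hcomp : ∀ θ, 0 ≤ θ → θ ≤ h → ∀ t, 0 ≤ t → ∀ i, H i t ≤ G i (t - θ) := by
    intro θ hθ0 hθ t ht i
    refine R.le_of_window (G := H) (H := fun i t => G i (t - θ)) (t₀ := θ) (S := S + θ)
      (fun i e => by linarith [(hb i e).2]) (fun t _ h2 i => ?_)
      (fun t ht => Hhom t (hθ0.trans_lt ht)) (fun t ht i => ?_) t (by linarith) i
    · by_cases h3 : -h < t
      · rw [G0 i (t - θ) (by linarith), Set.indicator_of_mem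
          (Set.mem_Ioc.2 ⟨by linarith, by linarith⟩)]
        exact (H01 i t).2
      · rw [H0 i t (by linarith), Set.indicator_of_notMem (fun h4 => h3 h4.1)]
        exact (G01 i _).1
    · dsimp only
      rw [Ghom (t - θ) (by linarith) i]
      refine Finset.sum_congr rfl fun e _ => ?_
      rw [show t - R.s i e - θ = t - θ - R.s i e by ring]
  have hlim := R.tendsto_window hirr hloop hq hq1 Gm G01 Ghom h i
  have hC : ∑ i, q i * ∑ e, R.p i e * ∫ u in (-R.s i e)..0, G (R.tgt i e) u ≤
      2 * h * ∑ i, q i := by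
    have hI : ∀ i (e : R.E i), ∫ u in (-R.s i e)..0, G (R.tgt i e) u ≤ 2 * h := by
      intro i e
      have hs := R.s_pos i e
      have hIntg := fun j a b => intervalIntegrable_of_unit (Gm j) (G01 j) a b
      by_cases hc : R.s i e ≤ 2 * h
      · have := abs_integral_le_of_unit (G01 (R.tgt i e)) (-R.s i e) 0
        rw [zero_sub, neg_neg, abs_of_pos hs] at this
        linarith [(abs_le.1 this).2]
      · push Not at hc
        rw [← intervalIntegral.integral_add_adjacent_intervals (hIntg _ _ (-(2 * h)))
          (hIntg _ _ 0)]
        have a1 : ∫ u in (-R.s i e)..(-(2 * h)), G (R.tgt i e) u = 0 := by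
          rw [intervalIntegral.integral_zero_ae]
          refine Eventually.of_forall fun u hu => ?_
          rw [Set.uIoc_of_le (by linarith)] at hu
          rw [G0 _ u (by linarith [hu.2]), Set.indicator_of_notMem]
          exact fun h4 => absurd h4.1 (not_lt.2 hu.2)
        have a2 := abs_integral_le_of_unit (G01 (R.tgt i e)) (-(2 * h)) 0
        rw [zero_sub, neg_neg, abs_of_pos (show 0 < 2 * h by linarith)] at a2
        linarith [(abs_le.1 a2).2]
    rw [Finset.mul_sum]
    refine Finset.sum_le_sum fun i _ => ?_
    rw [mul_comm (2 * h)]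
    refine mul_le_mul_of_nonneg_left ?_ (hq0 i)
    calc _ ≤ ∑ e, R.p i e * (2 * h) :=
          Finset.sum_le_sum fun e _ => mul_le_mul_of_nonneg_left (hI i e) (R.p_pos i e).le
      _ = 2 * h := by rw [← Finset.sum_mul, R.p_sum, one_mul]
  have hlt : h * (∑ i, q i * ∑ e, R.p i e * ∫ u in (-R.s i e)..0, G (R.tgt i e) u) <
      h * (2 * h * (∑ i, q i) + η) := mul_lt_mul_of_pos_left (by linarith) hh
  filter_upwards [hlim.eventually (gt_mem_nhds hlt), eventually_ge_atTop 0] with t h1 h2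
  have h3 : ∫ u in (t - h)..t, H i t ≤ ∫ u in (t - h)..t, G i u := by
    refine intervalIntegral.integral_mono_on (by linarith) (by simp)
      (intervalIntegrable_of_unit (Gm i) (G01 i) _ _) fun u hu => ?_
    have := hcomp (t - u) (by linarith [hu.2]) (by linarith [hu.1]) t h2 i
    simpa using this
  rw [intervalIntegral.integral_const, smul_eq_mul, sub_sub_cancel] at h3
  exact (lt_of_mul_lt_mul_left (h3.trans_lt h1) hh.le).le

/-- Renewal theorem for the state at the first passage: `F i t` is the probability that the walk
started at `i` is in state `r` when its elapsed time first reaches `t`. The averaged theorem gives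
the limit of the window means of `F`, and the oscillation of `F` in a short window is controlled by
the function `H` of `exists_overshoot`. -/
theorem exists_solution_tendsto [Fintype ι] [Nonempty ι] [DecidableEq ι]
    (hirr : ∀ i j, ∃ x, R.Path i j x)
    (hloop : ∀ i, ∀ ε > 0, ∃ u v, R.Path i i u ∧ R.Path i i v ∧ u < v ∧ v < u + ε)
    {q : ι → ℝ} (hq0 : ∀ i, 0 ≤ q i)
    (hq : ∀ g : ι → ℝ, ∑ i, q i * ∑ e, R.p i e * g (R.tgt i e) = ∑ i, q i * g i)
    (hq1 : ∑ i, q i * ∑ e, R.p i e * R.s i e = 1) (r : ι) :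
    ∃ F : ι → ℝ → ℝ, (∀ i t, t ≤ 0 → F i t = if i = r then 1 else 0) ∧
      (∀ t, 0 < t → R.HomAt F t) ∧
      ∀ i, Tendsto (F i) atTop
        (𝓝 (∑ i, q i * ∑ e, R.p i e * (R.s i e * if R.tgt i e = r then 1 else 0))) := by
  obtain ⟨F, Fm, F01, F0, Fhom⟩ := R.exists_solution (fun i _ => if i = r then (1 : ℝ) else 0)
    (fun i => measurable_const) (fun i t => by split_ifs <;> norm_num)
  refine ⟨F, F0, Fhom, fun i => ?_⟩
  obtain ⟨δ, S, hδ, hS, hb⟩ := R.exists_bounds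
  have hI : ∀ i (e : R.E i), ∫ u in (-R.s i e)..0, F (R.tgt i e) u =
      R.s i e * if R.tgt i e = r then 1 else 0 := by
    intro i e
    have hs := R.s_pos i e
    have : ∫ u in (-R.s i e)..0, F (R.tgt i e) u =
        ∫ u in (-R.s i e)..0, (if R.tgt i e = r then (1 : ℝ) else 0) := by
      refine intervalIntegral.integral_congr fun u hu => ?_
      rw [Set.uIcc_of_le (by linarith)] at hu
      exact F0 _ u hu.2
    rw [this, intervalIntegral.integral_const, zero_sub, neg_neg, smul_eq_mul]
  set C := ∑ i, q i * ∑ e, R.p i e * (R.s i e * if R.tgt i e = r then 1 else 0) with hC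
  rw [Metric.tendsto_nhds]
  intro ε hε
  set Z := ∑ i, q i with hZ
  have hZ0 : 0 ≤ Z := Finset.sum_nonneg fun i _ => hq0 i
  have hh : 0 < ε / (8 * (Z + 1)) := by positivity
  set h := ε / (8 * (Z + 1)) with hdef
  have hhZ : 2 * h * Z ≤ ε / 4 := by
    have : 2 * h * (Z + 1) = ε / 4 := by rw [hdef]; field_simp; norm_num
    nlinarith
  obtain ⟨H, Hhom, Hnn, H1, Hup⟩ := R.exists_overshoot hirr hloop hq0 hq hq1 hh
  -- The passages of `t` and of `t + θ` differ only if the elapsed time visits `[t, t + θ)`.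
  have hosc : ∀ θ, 0 ≤ θ → θ < h → ∀ t, 0 ≤ t → |F i (t + θ) - F i t| ≤ H i t := by
    intro θ hθ0 hθ t ht
    have hD : ∀ t, 0 < t → R.HomAt (fun i t => F i (t + θ) - F i t) t := by
      intro t ht
      refine HomAt.sub (G := fun i t => F i (t + θ)) (fun i => ?_) (Fhom t ht)
      dsimp only
      rw [Fhom (t + θ) (by linarith) i]
      refine Finset.sum_congr rfl fun e _ => ?_
      rw [show t - R.s i e + θ = t + θ - R.s i e by ring]
    have hN : ∀ t, 0 < t → R.HomAt (fun i t => F i t - F i (t + θ)) t := by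
      intro t ht i
      have := hD t ht i
      dsimp only at this ⊢
      rw [← neg_sub, this, ← Finset.sum_neg_distrib]
      refine Finset.sum_congr rfl fun e _ => by ring
    have hw : ∀ t, 0 - S ≤ t → t ≤ 0 → ∀ i, |F i (t + θ) - F i t| ≤ H i t := by
      intro t _ ht0 i
      by_cases h3 : -h < t
      · rw [H1 i t h3 ht0, abs_le]
        have a1 := F01 i t
        have a2 := F01 i (t + θ)
        constructor <;> linarith [a1.1, a1.2, a2.1, a2.2]
      · rw [F0 i t ht0, F0 i (t + θ) (by linarith), sub_self, abs_zero]
        exact Hnn i t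
    have hSb := fun i e => (hb i e).2
    rw [abs_le']
    refine ⟨R.le_of_window hSb (fun t h1 h2 i => (abs_le'.1 (hw t h1 h2 i)).1) hD Hhom t
      (by linarith) i, ?_⟩
    have := R.le_of_window hSb (fun t h1 h2 i => ?_) hN Hhom t (by linarith) i
    · linarith
    · have := (abs_le'.1 (hw t h1 h2 i)).2
      linarith
  have hlim := R.tendsto_window hirr hloop hq hq1 Fm F01 Fhom h i
  simp only [hI] at hlim
  rw [← hC] at hlim
  have hA := hlim.eventually (Metric.ball_mem_nhds _ (show 0 < h * (ε / 4) by positivity))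
  obtain ⟨T, hT⟩ := eventually_atTop.1 (Hup i (ε / 4) (by linarith))
  filter_upwards [hA, eventually_ge_atTop (T + h), eventually_ge_atTop h] with t h1 h2 h3
  have h4 : ‖∫ u in (t - h)..t, (F i t - F i u)‖ ≤ (ε / 2) * |t - (t - h)| := by
    refine intervalIntegral.norm_integral_le_of_norm_le_const fun u hu => ?_
    rw [Set.uIoc_of_le (by linarith)] at hu
    have a1 := hosc (t - u) (by linarith [hu.2]) (by linarith [hu.1]) u (by linarith [hu.1])
    rw [add_sub_cancel] at a1
    have a2 := hT u (by linarith [hu.1])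
    rw [Real.norm_eq_abs]
    linarith
  rw [intervalIntegral.integral_sub (by simp)
    (intervalIntegrable_of_unit (Fm i) (F01 i) _ _), intervalIntegral.integral_const,
    smul_eq_mul, sub_sub_cancel, abs_of_pos hh, Real.norm_eq_abs] at h4
  rw [Real.dist_eq] at h1
  have h5 := abs_lt.1 h1
  have h6 := abs_le.1 h4
  rw [Real.dist_eq, abs_lt]
  constructor
  · have : h * (-ε) < h * (F i t - C) := by nlinarith
    exact lt_of_mul_lt_mul_left this hh.le
  · have : h * (F i t - C) < h * ε := by nlinarith
    exact lt_of_mul_lt_mul_left this hh.le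

end RenewalSystem

/-! ### Adjugates of stochastic matrices -/

section StochasticMatrix

variable {n : ℕ} {M : Matrix (Fin n) (Fin n) ℝ}

/-- Maximum principle: a function harmonic away from `j` for an irreducible stochastic matrix attains
its maximum at `j`. -/
lemma harmonic_le (h0 : ∀ i j, 0 ≤ M i j) (h1 : ∀ i, ∑ j, M i j = 1)
    (hirr : ∀ i j, Relation.TransGen (fun a b => 0 < M a b) i j)
    (v : Fin n → ℝ) (j : Fin n) (hv : ∀ i, i ≠ j → v i = ∑ k, M i k * v k) (i : Fin n) :
    v i ≤ v j := by
  have : Nonempty (Fin n) := ⟨j⟩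
  obtain ⟨m, hm⟩ := Finite.exists_max v
  have hstep : ∀ a b, a ≠ j → v a = v m → 0 < M a b → v b = v m := by
    intro a b haj ha hab
    have hsum : ∑ k, M a k * (v m - v k) = 0 := by
      simp only [mul_sub, Finset.sum_sub_distrib, ← Finset.sum_mul, h1, one_mul]
      rw [← hv a haj, ha, sub_self]
    have := (Finset.sum_eq_zero_iff_of_nonneg
      (fun k _ => mul_nonneg (h0 a k) (sub_nonneg.2 (hm k)))).1 hsum b (Finset.mem_univ b)
    rcases mul_eq_zero.1 this with h | h
    · exact absurd h hab.ne'
    · linarith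
  have key : ∀ a, Relation.TransGen (fun a b => 0 < M a b) a j → v a = v m → v j = v m := by
    intro a ha
    induction ha using Relation.TransGen.head_induction_on with
    | @single a hab =>
      intro hva
      by_cases haj : a = j
      · rw [← haj, hva]
      · exact hstep a j haj hva hab
    | @head a b hab _ ih =>
      intro hva
      by_cases haj : a = j
      · rw [← haj, hva]
      · exact ih (hstep a b haj hva hab)
  rw [key m (hirr m j) rfl]
  exact hm i

lemma det_one_sub_eq_zero (h1 : ∀ i, ∑ j, M i j = 1) (i₀ : Fin n) : (1 - M).det = 0 := by
  rw [← Matrix.exists_mulVec_eq_zero_iff]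
  refine ⟨fun _ => 1, fun h => one_ne_zero (congrFun h i₀), ?_⟩
  ext i
  simp [Matrix.mulVec, dotProduct, Matrix.one_apply, h1]

/-- The columns of `adj (1 - M)` are harmonic, hence constant. -/
lemma adjugate_row_eq (h0 : ∀ i j, 0 ≤ M i j) (h1 : ∀ i, ∑ j, M i j = 1)
    (hirr : ∀ i j, Relation.TransGen (fun a b => 0 < M a b) i j) (a b c : Fin n) :
    (1 - M).adjugate a c = (1 - M).adjugate b c := by
  have hA : (1 - M) * (1 - M).adjugate = 0 := by
    rw [Matrix.mul_adjugate, det_one_sub_eq_zero h1 a, zero_smul]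
  have hv : ∀ i, (1 - M).adjugate i c = ∑ k, M i k * (1 - M).adjugate k c := by
    intro i
    have := congrFun (congrFun hA i) c
    rw [Matrix.sub_mul, Matrix.one_mul, Matrix.sub_apply, Matrix.mul_apply, Matrix.zero_apply,
      sub_eq_zero] at this
    exact this
  exact le_antisymm
    (harmonic_le h0 h1 hirr (fun i => (1 - M).adjugate i c) b (fun i _ => hv i) a)
    (harmonic_le h0 h1 hirr (fun i => (1 - M).adjugate i c) a (fun i _ => hv i) b)

/-- The `j`-th principal minor of `1 - t M` equals `1` at `t = 0` and, by the maximum principle, does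
not vanish for `t ∈ [0, 1]`; so it is positive at `t = 1`. -/
lemma adjugate_diag_pos (h0 : ∀ i j, 0 ≤ M i j) (h1 : ∀ i, ∑ j, M i j = 1)
    (hirr : ∀ i j, Relation.TransGen (fun a b => 0 < M a b) i j) (j : Fin n) :
    0 < (1 - M).adjugate j j := by
  rw [Matrix.adjugate_apply]
  let f : ℝ → ℝ := fun t => ((1 - t • M).updateRow j (Pi.single j 1)).det
  have hcont : Continuous f := by
    refine Continuous.matrix_det ?_
    have h : Continuous fun t : ℝ => (1 : Matrix (Fin n) (Fin n) ℝ) - t • M := by fun_prop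
    exact h.matrix_updateRow j continuous_const
  have hne : ∀ t ∈ Set.Icc (0 : ℝ) 1, f t ≠ 0 := by
    intro t ht hft
    obtain ⟨v, hv0, hv⟩ := Matrix.exists_mulVec_eq_zero_iff.2 hft
    have hvj : v j = 0 := by
      have := congrFun hv j
      simpa [Matrix.mulVec, Matrix.updateRow_self] using this
    have hvi : ∀ i, i ≠ j → v i = ∑ k, t * M i k * v k := by
      intro i hij
      have := congrFun hv i
      rw [Matrix.mulVec, Matrix.updateRow_ne hij] at this
      change ((1 - t • M).mulVec v) i = 0 at this
      rw [Matrix.sub_mulVec, Matrix.one_mulVec, Pi.sub_apply, sub_eq_zero] at this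
      rw [this]
      simp [Matrix.mulVec, dotProduct]
    rcases ht.2.lt_or_eq with hlt | rfl
    · have : Nonempty (Fin n) := ⟨j⟩
      obtain ⟨m, hm⟩ := Finite.exists_max fun i => |v i|
      have hm0 : |v m| = 0 := by
        by_cases hmj : m = j
        · rw [hmj, hvj, abs_zero]
        · have h2 : |v m| ≤ t * |v m| := by
            calc |v m| = |∑ k, t * M m k * v k| := by rw [← hvi m hmj]
              _ ≤ ∑ k, |t * M m k * v k| := Finset.abs_sum_le_sum_abs _ _
              _ ≤ ∑ k, t * M m k * |v m| := by
                refine Finset.sum_le_sum fun k _ => ?_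
                rw [abs_mul, abs_of_nonneg (mul_nonneg ht.1 (h0 m k))]
                exact mul_le_mul_of_nonneg_left (hm k) (mul_nonneg ht.1 (h0 m k))
              _ = t * |v m| := by rw [← Finset.sum_mul, ← Finset.mul_sum, h1, mul_one]
          nlinarith [abs_nonneg (v m)]
      apply hv0
      ext i
      have := hm i
      rw [hm0] at this
      exact abs_nonpos_iff.1 this
    · simp only [one_mul] at hvi
      have a1 := harmonic_le h0 h1 hirr v j hvi
      have a2 := harmonic_le h0 h1 hirr (fun i => -v i) j (fun i hi => by
        rw [hvi i hi, ← Finset.sum_neg_distrib]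
        exact Finset.sum_congr rfl fun k _ => by ring)
      apply hv0
      ext i
      have b1 := a1 i
      have b2 := a2 i
      simp only [hvj] at b1 b2
      simp only [Pi.zero_apply]
      linarith
  have hf0 : f 0 = 1 := by
    simp only [f, zero_smul, sub_zero]
    have : (1 : Matrix (Fin n) (Fin n) ℝ).updateRow j (Pi.single j 1) = 1 := by
      ext a b
      by_cases h : a = j
      · subst h; simp [Matrix.updateRow_self, Pi.single_apply, Matrix.one_apply, eq_comm]
      · simp [Matrix.updateRow_ne h]
    rw [this, Matrix.det_one]
  have hf1 : f 1 = ((1 - M).updateRow j (Pi.single j 1)).det := by simp [f]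
  rw [← hf1]
  by_contra hcon
  push Not at hcon
  obtain ⟨t, ht, hft⟩ := intermediate_value_Icc' zero_le_one hcont.continuousOn
    (show (0 : ℝ) ∈ Set.Icc (f 1) (f 0) from ⟨hcon, by rw [hf0]; norm_num⟩)
  exact hne t ht hft

/-- The rows of `adj (1 - M)` are stationary for `M`. -/
lemma adjugate_stationary (h1 : ∀ i, ∑ j, M i j = 1) (a c : Fin n) :
    ∑ k, (1 - M).adjugate a k * M k c = (1 - M).adjugate a c := by
  have hA : (1 - M).adjugate * (1 - M) = 0 := by
    rw [Matrix.adjugate_mul, det_one_sub_eq_zero h1 a, zero_smul]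
  have := congrFun (congrFun hA a) c
  rw [Matrix.mul_sub, Matrix.mul_one, Matrix.sub_apply, Matrix.mul_apply, Matrix.zero_apply,
    sub_eq_zero] at this
  exact this.symm

end StochasticMatrix

/-! ### Volumes of tiles and substitution of packings -/

section Geometry

variable {d n : ℕ}

/-- A set of positive finite volume whose boundary is null. -/
def IsNice (A : Set (Euc d)) : Prop :=
  0 < volume A ∧ volume A < ⊤ ∧ volume (frontier A) = 0

lemma IsNice.interior_nonempty {A : Set (Euc d)} (hA : IsNice A) : (interior A).Nonempty := by
  rw [Set.nonempty_iff_ne_empty]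
  intro h
  have h1 : A ⊆ frontier A := by
    rw [frontier, h, Set.sdiff_empty]
    exact subset_closure
  exact hA.1.ne' (measure_mono_null h1 hA.2.2)

lemma IsNice.nullMeasurableSet {A : Set (Euc d)} (hA : IsNice A) :
    NullMeasurableSet A volume :=
  nullMeasurableSet_of_null_frontier hA.2.2

lemma IsNice.toReal_pos {A : Set (Euc d)} (hA : IsNice A) : 0 < (volume A).toReal :=
  ENNReal.toReal_pos hA.1.ne' hA.2.1.ne

lemma aedisjoint_of_interior {A B : Set (Euc d)} (hA : IsNice A) (hB : IsNice B)
    (h : Disjoint (interior A) (interior B)) : AEDisjoint volume A B := by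
  have h1 : A ∩ B ⊆ frontier A ∪ frontier B := by
    rintro x ⟨hxA, hxB⟩
    by_cases h2 : x ∈ interior A
    · right
      exact ⟨subset_closure hxB, fun h3 => Set.disjoint_left.1 h h2 h3⟩
    · left
      exact ⟨subset_closure hxA, h2⟩
  exact measure_mono_null h1 (measure_union_null hA.2.2 hB.2.2)

lemma IsTile.isNice {T : Set (Euc d)} (hT : IsTile T) : IsNice T :=
  ⟨hT.2.2.1, hT.1.measure_lt_top, hT.2.2.2⟩

lemma volume_isometry_image (φ : Euc d ≃ᵢ Euc d) (A : Set (Euc d)) :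
    volume (φ '' A) = volume A := by
  have h : ⇑φ = (fun x => x + φ 0) ∘ φ.toRealLinearIsometryEquiv := by
    ext1 x
    simp [IsometryEquiv.toRealLinearIsometryEquiv_apply]
  rw [h, Set.image_comp, Set.image_add_right, measure_preimage_add_right,
    LinearIsometryEquiv.image_eq_preimage_symm]
  exact (φ.toRealLinearIsometryEquiv.symm.measurePreserving).measure_preimage_equiv
    (f := φ.toRealLinearIsometryEquiv.symm.toHomeomorph.toMeasurableEquiv) A

/-- The similarity `x ↦ φ (a • x)` as a homeomorphism scaling volumes by `a ^ d`. -/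
lemma exists_similarity (φ : Euc d ≃ᵢ Euc d) {a : ℝ} (ha : 0 < a) :
    ∃ g : Euc d ≃ₜ Euc d, ∀ A, φ '' (a • A) = g '' A ∧
      volume (g '' A) = ENNReal.ofReal (a ^ d) * volume A := by
  refine ⟨(Homeomorph.smulOfNeZero a ha.ne').trans φ.toHomeomorph, fun A => ?_⟩
  have h : φ '' (a • A) =
      ((Homeomorph.smulOfNeZero a ha.ne').trans φ.toHomeomorph) '' A := by
    rw [← Set.image_smul, Set.image_image]
    rfl
  refine ⟨h, ?_⟩
  rw [← h, volume_isometry_image, Measure.addHaar_smul, finrank_euclideanSpace_fin,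
    abs_of_pos (pow_pos ha d)]

lemma IsNice.image {A : Set (Euc d)} (hA : IsNice A) (g : Euc d ≃ₜ Euc d) {c : ℝ} (hc : 0 < c)
    (hg : ∀ A, volume (g '' A) = ENNReal.ofReal c * volume A) : IsNice (g '' A) := by
  refine ⟨?_, ?_, ?_⟩
  · rw [hg]; exact ENNReal.mul_pos (by simpa using hc) hA.1.ne'
  · rw [hg]; exact ENNReal.mul_lt_top ENNReal.ofReal_lt_top hA.2.1
  · rw [← g.image_frontier, hg, hA.2.2, mul_zero]

namespace MSScheme

variable (σ : MSScheme d n)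

lemma rule_isNice {ϱ} (hϱ : ϱ ∈ σ.rules) (i j : Fin n) (k : Fin (σ.numSub i j)) :
    IsNice (ϱ i j k) := by
  obtain ⟨φ, hφ⟩ := σ.rules_iso ϱ hϱ i j k
  obtain ⟨g, hg⟩ := exists_similarity φ (σ.scale_pos i j k)
  rw [hφ, (hg _).1]
  exact (σ.tile j).isNice.image g (pow_pos (σ.scale_pos i j k) d) fun A => (hg A).2

lemma beta_pow (hd : d ≠ 0) (i j : Fin n) (k : Fin (σ.numSub i j)) :
    σ.beta i j k ^ d * (volume (σ.T i)).toReal =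
      σ.scale i j k ^ d * (volume (σ.T j)).toReal := by
  have hi := (σ.tile i).isNice.toReal_pos
  have hj := (σ.tile j).isNice.toReal_pos
  rw [beta, mul_pow, one_div, Real.rpow_inv_natCast_pow (by positivity) hd]
  field_simp

lemma rule_volume (hd : d ≠ 0) {ϱ} (hϱ : ϱ ∈ σ.rules) (i j : Fin n)
    (k : Fin (σ.numSub i j)) :
    (volume (ϱ i j k)).toReal = σ.beta i j k ^ d * (volume (σ.T i)).toReal := by
  obtain ⟨φ, hφ⟩ := σ.rules_iso ϱ hϱ i j k
  obtain ⟨g, hg⟩ := exists_similarity φ (σ.scale_pos i j k)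
  rw [hφ, (hg _).1, (hg _).2, ENNReal.toReal_mul,
    ENNReal.toReal_ofReal (pow_pos (σ.scale_pos i j k) d).le, σ.beta_pow hd]

/-- The relative volumes of the substitution tiles of a prototile add up to one. -/
lemma sum_beta_pow (hd : d ≠ 0) (i : Fin n) :
    ∑ e : Σ j : Fin n, Fin (σ.numSub i j), σ.beta i e.1 e.2 ^ d = 1 := by
  obtain ⟨ϱ, hϱ⟩ := σ.rules_nonempty
  have h1 : volume (⋃ e : Σ j : Fin n, Fin (σ.numSub i j), ϱ i e.1 e.2) =
      ∑ e : Σ j : Fin n, Fin (σ.numSub i j), volume (ϱ i e.1 e.2) := by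
    rw [measure_iUnion₀, tsum_fintype]
    · intro e e' hne
      exact aedisjoint_of_interior (σ.rule_isNice hϱ i _ _) (σ.rule_isNice hϱ i _ _)
        (σ.rules_disjoint ϱ hϱ i e e' hne)
    · exact fun e => (σ.rule_isNice hϱ i _ _).nullMeasurableSet
  rw [σ.rules_cover ϱ hϱ i] at h1
  have h2 := congrArg ENNReal.toReal h1
  rw [ENNReal.toReal_sum (fun e _ => (σ.rule_isNice hϱ i _ _).2.1.ne)] at h2
  simp only [σ.rule_volume hd hϱ, ← Finset.sum_mul] at h2
  have hi := (σ.tile i).isNice.toReal_pos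
  exact mul_right_cancel₀ hi.ne' (by rw [one_mul, ← h2])

end MSScheme

/-- The volume of a labeled tile, as a real number. -/
noncomputable def LTile.vol (S : LTile d n) : ℝ := (volume S.carrier).toReal

/-- A finite collection of labeled tiles, each of positive finite volume with null boundary, whose
interiors are pairwise disjoint. -/
def IsPacking (P : Finset (LTile d n)) : Prop :=
  (∀ S ∈ P, IsNice S.carrier) ∧
    ∀ S ∈ P, ∀ S' ∈ P, S ≠ S' → Disjoint (interior S.carrier) (interior S'.carrier)

lemma IsPacking.volume_typeUnion {P : Finset (LTile d n)} (hP : IsPacking P) (r : Fin n) :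
    (volume (typeUnion P r)).toReal = ∑ S ∈ P, S.vol * if S.type = r then 1 else 0 := by
  have hsub : ∀ S ∈ P.filter (fun S => S.type = r), S ∈ P := fun S hS => (Finset.mem_filter.1 hS).1
  rw [typeUnion, measure_biUnion_finset₀, ENNReal.toReal_sum, Finset.sum_filter]
  · exact Finset.sum_congr rfl fun S _ => by simp [LTile.vol]
  · exact fun S hS => (hP.1 S (hsub S hS)).2.1.ne
  · intro S hS S' hS' hne
    exact aedisjoint_of_interior (hP.1 S (hsub S hS)) (hP.1 S' (hsub S' hS'))
      (hP.2 S (hsub S hS) S' (hsub S' hS') hne)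
  · exact fun S hS => (hP.1 S (hsub S hS)).nullMeasurableSet

/-- A substitution of `S` is indexed injectively by the substitution tiles of its type. Injectivity
matters because the pieces are given as an image `Finset`. -/
lemma SubstitutesTo.exists_children {σ : MSScheme d n} (hd : d ≠ 0) {S : LTile d n}
    {P : Finset (LTile d n)} (h : SubstitutesTo σ S P) :
    ∃ child : (Σ j : Fin n, Fin (σ.numSub S.type j)) → LTile d n,
      Function.Injective child ∧ P = Finset.image child Finset.univ ∧
      (∀ e, (child e).type = e.1) ∧ (∀ e, IsNice (child e).carrier) ∧
      (∀ e, (child e).vol = σ.beta S.type e.1 e.2 ^ d * S.vol) ∧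
      (∀ e, (child e).carrier ⊆ S.carrier) ∧
      ∀ e e', e ≠ e' → Disjoint (interior (child e).carrier) (interior (child e').carrier) := by
  obtain ⟨ϱ, hϱ, a, ha, φ, hS, hP⟩ := h
  obtain ⟨g, hg⟩ := exists_similarity φ ha
  have had : 0 < a ^ d := pow_pos ha d
  have hnice : ∀ e : Σ j : Fin n, Fin (σ.numSub S.type j),
      IsNice (φ '' (a • ϱ S.type e.1 e.2)) := fun e => by
    rw [(hg _).1]
    exact (σ.rule_isNice hϱ _ _ _).image g had fun A => (hg A).2
  have hdisj : ∀ e e' : Σ j : Fin n, Fin (σ.numSub S.type j), e ≠ e' →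
      Disjoint (interior (φ '' (a • ϱ S.type e.1 e.2)))
        (interior (φ '' (a • ϱ S.type e'.1 e'.2))) := fun e e' hne => by
    rw [(hg _).1, (hg _).1, ← g.image_interior, ← g.image_interior,
      Set.disjoint_image_iff g.injective]
    exact σ.rules_disjoint ϱ hϱ _ e e' hne
  refine ⟨_, ?_, hP, fun e => rfl, hnice, fun e => ?_, fun e => ?_, hdisj⟩
  · intro e e' hee
    by_contra hne
    have h1 := hdisj e e' hne
    have h2 : φ '' (a • ϱ S.type e.1 e.2) = φ '' (a • ϱ S.type e'.1 e'.2) :=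
      congrArg LTile.carrier hee
    rw [← h2, disjoint_self] at h1
    exact (hnice e).interior_nonempty.ne_empty h1
  · simp only [LTile.vol]
    rw [hS, (hg _).1, (hg _).1, (hg _).2, (hg _).2, ENNReal.toReal_mul, ENNReal.toReal_mul,
      σ.rule_volume hd hϱ]
    ring
  · dsimp only
    rw [hS, ← σ.rules_cover ϱ hϱ S.type]
    exact Set.image_mono (Set.smul_set_mono
      (Set.subset_iUnion (fun e : Σ j : Fin n, Fin (σ.numSub S.type j) => ϱ S.type e.1 e.2) e))

/-- Substituting the tiles in a subset `Q` of a packing `P` yields a packing. A sum over its tiles of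
a function of type and volume is obtained by replacing the terms of `Q` with those of their pieces;
in particular no two pieces coincide. -/
lemma IsPacking.step {σ : MSScheme d n} (hd : d ≠ 0) {P Q : Finset (LTile d n)}
    (hP : IsPacking P) (hQ : Q ⊆ P) {repl : LTile d n → Finset (LTile d n)}
    (hrepl : ∀ S ∈ Q, SubstitutesTo σ S (repl S)) :
    IsPacking ((P \ Q) ∪ Q.biUnion repl) ∧
    (∀ g : Fin n → ℝ → ℝ, ∑ S ∈ (P \ Q) ∪ Q.biUnion repl, g S.type S.vol =
      ∑ S ∈ P \ Q, g S.type S.vol +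
      ∑ S ∈ Q, ∑ e : Σ j : Fin n, Fin (σ.numSub S.type j),
        g e.1 (σ.beta S.type e.1 e.2 ^ d * S.vol)) ∧
    ∀ S ∈ (P \ Q) ∪ Q.biUnion repl, S ∈ P \ Q ∨
      ∃ S' ∈ Q, ∃ e : Σ j : Fin n, Fin (σ.numSub S'.type j),
        S.vol = σ.beta S'.type e.1 e.2 ^ d * S'.vol := by
  choose! child hinj himg htype hnice hvol hsub hdisj using
    fun S hS => (hrepl S hS).exists_children hd
  have hmem : ∀ S ∈ Q, ∀ C ∈ repl S, ∃ e, child S e = C := by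
    intro S hS C hC
    rw [himg S hS] at hC
    simpa using hC
  have hCnice : ∀ S ∈ Q, ∀ C ∈ repl S, IsNice C.carrier := by
    intro S hS C hC
    obtain ⟨e, rfl⟩ := hmem S hS C hC
    exact hnice S hS e
  have hCsub : ∀ S ∈ Q, ∀ C ∈ repl S, C.carrier ⊆ S.carrier := by
    intro S hS C hC
    obtain ⟨e, rfl⟩ := hmem S hS C hC
    exact hsub S hS e
  have hcross : ∀ S ∈ Q, ∀ C ∈ repl S, ∀ S' ∈ P, S ≠ S' → ∀ A ⊆ S'.carrier,
      Disjoint (interior C.carrier) (interior A) := by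
    intro S hS C hC S' hS' hne A hA
    exact (hP.2 S (hQ hS) S' hS' hne).mono (interior_mono (hCsub S hS C hC)) (interior_mono hA)
  have hne_of : ∀ A B : LTile d n, IsNice A.carrier →
      Disjoint (interior A.carrier) (interior B.carrier) → A ≠ B := by
    rintro A _ hA hAB rfl
    exact hA.interior_nonempty.ne_empty (disjoint_self.1 hAB)
  have hd1 : Disjoint (P \ Q) (Q.biUnion repl) := by
    rw [Finset.disjoint_left]
    intro A hA hA'
    obtain ⟨S, hS, hAS⟩ := Finset.mem_biUnion.1 hA'
    have hA2 := Finset.mem_sdiff.1 hA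
    exact hne_of A A (hCnice S hS A hAS) (hcross S hS A hAS A hA2.1
      (fun h => hA2.2 (h ▸ hS)) _ subset_rfl) rfl
  have hd2 : (Q : Set (LTile d n)).PairwiseDisjoint repl := by
    intro S hS S' hS' hne
    rw [Function.onFun, Finset.disjoint_left]
    intro A hA hA'
    exact hne_of A A (hCnice S hS A hA)
      (hcross S hS A hA S' (hQ hS') hne _ (hCsub S' hS' A hA')) rfl
  refine ⟨⟨?_, ?_⟩, ?_, ?_⟩
  · intro A hA
    rcases Finset.mem_union.1 hA with hA | hA
    · exact hP.1 A (Finset.mem_sdiff.1 hA).1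
    · obtain ⟨S, hS, hAS⟩ := Finset.mem_biUnion.1 hA
      exact hCnice S hS A hAS
  · intro A hA B hB hne
    rcases Finset.mem_union.1 hA with hA | hA <;> rcases Finset.mem_union.1 hB with hB | hB
    · exact hP.2 A (Finset.mem_sdiff.1 hA).1 B (Finset.mem_sdiff.1 hB).1 hne
    · obtain ⟨S, hS, hBS⟩ := Finset.mem_biUnion.1 hB
      have hA2 := Finset.mem_sdiff.1 hA
      exact (hcross S hS B hBS A hA2.1 (fun h => hA2.2 (h ▸ hS)) _ subset_rfl).symm
    · obtain ⟨S, hS, hAS⟩ := Finset.mem_biUnion.1 hA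
      have hB2 := Finset.mem_sdiff.1 hB
      exact hcross S hS A hAS B hB2.1 (fun h => hB2.2 (h ▸ hS)) _ subset_rfl
    · obtain ⟨S, hS, hAS⟩ := Finset.mem_biUnion.1 hA
      obtain ⟨S', hS', hBS⟩ := Finset.mem_biUnion.1 hB
      by_cases hSS : S = S'
      · subst hSS
        obtain ⟨e, rfl⟩ := hmem S hS A hAS
        obtain ⟨e', rfl⟩ := hmem S hS B hBS
        exact hdisj S hS e e' fun h => hne (by rw [h])
      · exact hcross S hS A hAS S' (hQ hS') hSS _ (hCsub S' hS' B hBS)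
  · intro g
    rw [Finset.sum_union hd1, Finset.sum_biUnion hd2]
    congr 1
    refine Finset.sum_congr rfl fun S hS => ?_
    rw [himg S hS, Finset.sum_image fun a _ b _ h => hinj S hS h]
    exact Finset.sum_congr rfl fun e _ => by rw [htype S hS, hvol S hS]
  · intro A hA
    rcases Finset.mem_union.1 hA with hA | hA
    · exact Or.inl hA
    · obtain ⟨S, hS, hAS⟩ := Finset.mem_biUnion.1 hA
      obtain ⟨e, rfl⟩ := hmem S hS A hAS
      exact Or.inr ⟨S, hS, e, hvol S hS e⟩

end Geometry

/-! ### The renewal system of a scheme -/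

section Scheme

variable {d n : ℕ} (σ : MSScheme d n)

lemma MSScheme.beta_pow_pos (i j : Fin n) (k : Fin (σ.numSub i j)) : 0 < σ.beta i j k ^ d :=
  pow_pos (σ.beta_pos i j k) d

lemma MSScheme.log_one_div_beta_pos (i j : Fin n) (k : Fin (σ.numSub i j)) :
    0 < Real.log (1 / σ.beta i j k) :=
  Real.log_pos (one_lt_one_div (σ.beta_pos i j k) (σ.beta_lt_one i j k))

/-- The renewal system of a scheme: one state per prototile, one edge per substitution tile,
with probability the relative volume `β ^ d` and waiting time `log (1 / β)`. -/
noncomputable def MSScheme.renewal (hd : d ≠ 0) : RenewalSystem (Fin n) where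
  E i := Σ j : Fin n, Fin (σ.numSub i j)
  fin _ := inferInstance
  tgt _ e := e.1
  p i e := σ.beta i e.1 e.2 ^ d
  s i e := Real.log (1 / σ.beta i e.1 e.2)
  p_pos i e := σ.beta_pow_pos i e.1 e.2
  p_sum i := σ.sum_beta_pow hd i
  s_pos i e := σ.log_one_div_beta_pos i e.1 e.2

/-- For `d = 0` all logarithms of volume ratios vanish. -/
lemma MSScheme.Incommensurable.dim_ne_zero {σ : MSScheme d n} (h : σ.Incommensurable) :
    d ≠ 0 := by
  rintro rfl
  obtain ⟨i, j, a, b, ⟨m, -, p, -, -, e, ha⟩, -, hq⟩ := h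
  refine hq 0 ?_
  simp [ha]

lemma MSScheme.renewal_path_single (hd : d ≠ 0) (i j : Fin n) (k : Fin (σ.numSub i j)) :
    (σ.renewal hd).Path i j (Real.log (1 / σ.beta i j k)) := by
  let e : (σ.renewal hd).E i := (⟨j, k⟩ : Σ j, Fin (σ.numSub i j))
  have hs : (σ.renewal hd).s i e = Real.log (1 / σ.beta i j k) := rfl
  rw [← hs]
  exact RenewalSystem.Path.single i j e rfl

lemma MSScheme.exists_renewal_path {σ : MSScheme d n} (hd : d ≠ 0) (hirr : σ.Irreducible)
    (i j : Fin n) : ∃ x, (σ.renewal hd).Path i j x := by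
  induction hirr i j with
  | single h => exact ⟨_, σ.renewal_path_single hd _ _ ⟨0, h⟩⟩
  | @tail b c _ h ih =>
    obtain ⟨x, hx⟩ := ih
    exact ⟨_, hx.trans (σ.renewal_path_single hd b c ⟨0, h⟩)⟩

lemma MSScheme.renewal_path_of_fin (hd : d ≠ 0) (m : ℕ) (p : Fin (m + 2) → Fin n)
    (e : (t : Fin (m + 1)) → Fin (σ.numSub (p t.castSucc) (p t.succ))) :
    (σ.renewal hd).Path (p 0) (p (Fin.last (m + 1)))
      (∑ t, Real.log (1 / σ.beta (p t.castSucc) (p t.succ) (e t))) := by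
  induction m with
  | zero =>
    have h := σ.renewal_path_single hd _ _ (e 0)
    simpa using h
  | succ m ih =>
    rw [Fin.sum_univ_succ]
    have h1 := σ.renewal_path_single hd _ _ (e 0)
    have h2 := ih (fun t => p t.succ) (fun t => e t.succ)
    exact h1.trans h2

lemma MSScheme.IsClosedPathLogVol.exists_path {σ : MSScheme d n} (hd : d ≠ 0) {i : Fin n} {a : ℝ}
    (h : σ.IsClosedPathLogVol i a) : ∃ x, (σ.renewal hd).Path i i x ∧ a = -(d * x) := by
  obtain ⟨m, hm, p, h0, h1, e, ha⟩ := h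
  obtain ⟨m, rfl⟩ := Nat.exists_eq_succ_of_ne_zero hm.ne'
  have hp := σ.renewal_path_of_fin hd m p e
  rw [h0, h1] at hp
  refine ⟨_, hp, ?_⟩
  rw [ha, Finset.mul_sum, ← Finset.sum_neg_distrib]
  refine Finset.sum_congr rfl fun t _ => ?_
  rw [Real.log_pow, one_div, Real.log_inv]
  ring

/-- Incommensurability provides, at every state, pairs of closed paths whose lengths are distinct
but arbitrarily close: two loops of incommensurable lengths `x`, `y` generate a dense subgroup,
and a small combination `m x + k y` is split into positive and negative parts. -/
lemma MSScheme.exists_close_loops {σ : MSScheme d n} (hd : d ≠ 0) (hirr : σ.Irreducible)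
    (hinc : σ.Incommensurable) (i : Fin n) {ε : ℝ} (hε : 0 < ε) :
    ∃ u v, (σ.renewal hd).Path i i u ∧ (σ.renewal hd).Path i i v ∧ u < v ∧ v < u + ε := by
  obtain ⟨i₀, j₀, a, b, ha, hb, hq⟩ := hinc
  obtain ⟨x, hx, rfl⟩ := ha.exists_path hd
  obtain ⟨y, hy, rfl⟩ := hb.exists_path hd
  have hy0 := hy.pos
  have hirrat : Irrational (x / y) := by
    rintro ⟨q, hq'⟩
    refine hq q ?_
    have : x = q * y := by rw [hq']; field_simp
    rw [this]; ring
  obtain ⟨z, hz, hz'⟩ := (dense_addSubgroupClosure_pair_iff.2 hirrat).exists_between hε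
  obtain ⟨m, k, hmk⟩ := AddSubgroup.mem_closure_pair.1 hz
  obtain ⟨c₁, h₁⟩ := exists_renewal_path hd hirr i i₀
  obtain ⟨c₂, h₂⟩ := exists_renewal_path hd hirr i₀ j₀
  obtain ⟨c₃, h₃⟩ := exists_renewal_path hd hirr j₀ i
  have hpath : ∀ A B : ℕ, (σ.renewal hd).Path i i (c₁ + (A * x + (c₂ + (B * y + c₃)))) :=
    fun A B => h₁.trans (hx.nsmul_add (h₂.trans (hy.nsmul_add h₃ B)) A)
  have hm : ((m.toNat : ℝ)) - ((-m).toNat : ℝ) = m := by exact_mod_cast Int.toNat_sub_toNat_neg m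
  have hk : ((k.toNat : ℝ)) - ((-k).toNat : ℝ) = k := by exact_mod_cast Int.toNat_sub_toNat_neg k
  have hdiff : (m.toNat : ℝ) * x + k.toNat * y = (-m).toNat * x + (-k).toNat * y + z := by
    rw [← hmk, zsmul_eq_mul, zsmul_eq_mul, ← hm, ← hk]; ring
  refine ⟨_, _, hpath (-m).toNat (-k).toNat, hpath m.toNat k.toNat, ?_, ?_⟩
  · linarith [hz'.1]
  · linarith [hz'.2]

/-! ### The matrix `Q_σ` -/

lemma Mmat_apply (i j : Fin n) : Mmat σ i j = ∑ k : Fin (σ.numSub i j), σ.beta i j k ^ d := rfl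

lemma Mmat_nonneg (i j : Fin n) : 0 ≤ Mmat σ i j := by
  rw [Mmat_apply]
  exact Finset.sum_nonneg fun k _ => (σ.beta_pow_pos i j k).le

lemma sum_Mmat (hd : d ≠ 0) (i : Fin n) : ∑ j, Mmat σ i j = 1 := by
  rw [← σ.sum_beta_pow hd i, Fintype.sum_sigma]
  rfl

lemma Mmat_transGen {σ : MSScheme d n} (hirr : σ.Irreducible) (i j : Fin n) :
    Relation.TransGen (fun a b => 0 < Mmat σ a b) i j := by
  refine Relation.TransGen.mono (fun a b hab => ?_) i j (hirr i j)
  rw [Mmat_apply]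
  have : Nonempty (Fin (σ.numSub a b)) := ⟨⟨0, hab⟩⟩
  exact Finset.sum_pos (fun k _ => σ.beta_pow_pos a b k) Finset.univ_nonempty

/-- The negated trace in the definition of `Q_σ`, with an arbitrary row `a` of the adjugate. -/
lemma neg_trace_eq {σ : MSScheme d n} (hd : d ≠ 0) (hirr : σ.Irreducible) (a : Fin n) :
    -(Matrix.trace ((1 - Mmat σ).adjugate * M'mat σ)) =
      ∑ i, (1 - Mmat σ).adjugate a i * ∑ e : Σ j : Fin n, Fin (σ.numSub i j),
        σ.beta i e.1 e.2 ^ d * Real.log (1 / σ.beta i e.1 e.2) := by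
  rw [Matrix.trace]
  simp only [Matrix.diag_apply, Matrix.mul_apply]
  rw [Finset.sum_comm, ← Finset.sum_neg_distrib]
  refine Finset.sum_congr rfl fun i _ => ?_
  rw [Fintype.sum_sigma, Finset.mul_sum, ← Finset.sum_neg_distrib]
  refine Finset.sum_congr rfl fun j _ => ?_
  rw [adjugate_row_eq (Mmat_nonneg σ) (sum_Mmat σ hd) (Mmat_transGen hirr) j a, ← mul_neg,
    M'mat, Matrix.of_apply, ← Finset.sum_neg_distrib]
  congr 1
  refine Finset.sum_congr rfl fun k _ => ?_
  rw [one_div, Real.log_inv]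
  ring

lemma adjugate_pos {σ : MSScheme d n} (hd : d ≠ 0) (hirr : σ.Irreducible) (a b : Fin n) :
    0 < (1 - Mmat σ).adjugate a b := by
  rw [adjugate_row_eq (Mmat_nonneg σ) (sum_Mmat σ hd) (Mmat_transGen hirr) a b]
  exact adjugate_diag_pos (Mmat_nonneg σ) (sum_Mmat σ hd) (Mmat_transGen hirr) b

lemma neg_trace_pos {σ : MSScheme d n} (hd : d ≠ 0) (hirr : σ.Irreducible) (a : Fin n) :
    0 < -(Matrix.trace ((1 - Mmat σ).adjugate * M'mat σ)) := by
  rw [neg_trace_eq hd hirr a]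
  refine Finset.sum_pos (fun i _ => mul_pos (adjugate_pos hd hirr a i) ?_) ⟨a, Finset.mem_univ a⟩
  refine Finset.sum_pos (fun e _ => mul_pos (σ.beta_pow_pos i e.1 e.2)
    (σ.log_one_div_beta_pos i e.1 e.2)) ?_
  refine Finset.nonempty_of_sum_ne_zero (f := fun e => σ.beta i e.1 e.2 ^ d) ?_
  rw [σ.sum_beta_pow hd i]
  exact one_ne_zero

lemma Qmat_pos {σ : MSScheme d n} (hd : d ≠ 0) (hirr : σ.Irreducible) (a b : Fin n) :
    0 < Qmat σ a b := by
  rw [Qmat, Matrix.smul_apply, smul_eq_mul]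
  exact mul_pos (inv_pos.2 (neg_trace_pos hd hirr a)) (adjugate_pos hd hirr a b)

lemma Qmat_row_eq {σ : MSScheme d n} (hd : d ≠ 0) (hirr : σ.Irreducible) (a b c : Fin n) :
    Qmat σ a c = Qmat σ b c := by
  rw [Qmat, Matrix.smul_apply, Matrix.smul_apply,
    adjugate_row_eq (Mmat_nonneg σ) (sum_Mmat σ hd) (Mmat_transGen hirr) a b]

lemma Qmat_stationary (hd : d ≠ 0) (a : Fin n) (g : Fin n → ℝ) :
    ∑ i, Qmat σ a i * ∑ e : Σ j : Fin n, Fin (σ.numSub i j), σ.beta i e.1 e.2 ^ d * g e.1 =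
      ∑ i, Qmat σ a i * g i := by
  have h1 : ∀ i, ∑ e : Σ j : Fin n, Fin (σ.numSub i j), σ.beta i e.1 e.2 ^ d * g e.1 =
      ∑ j, Mmat σ i j * g j := by
    intro i
    rw [Fintype.sum_sigma]
    refine Finset.sum_congr rfl fun j _ => ?_
    rw [Mmat_apply, Finset.sum_mul]
  simp only [h1, Finset.mul_sum]
  rw [Finset.sum_comm]
  refine Finset.sum_congr rfl fun j _ => ?_
  rw [Qmat]
  simp only [Matrix.smul_apply, smul_eq_mul]
  rw [← adjugate_stationary (sum_Mmat σ hd) a j, Finset.mul_sum, Finset.sum_mul]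
  refine Finset.sum_congr rfl fun k _ => ?_
  ring

/-- The denominator in `Q_σ` normalises the stationary vector to mean waiting time one. -/
lemma Qmat_normalized {σ : MSScheme d n} (hd : d ≠ 0) (hirr : σ.Irreducible) (a : Fin n) :
    ∑ i, Qmat σ a i * ∑ e : Σ j : Fin n, Fin (σ.numSub i j),
      σ.beta i e.1 e.2 ^ d * Real.log (1 / σ.beta i e.1 e.2) = 1 := by
  refine Eq.trans ?_ (inv_mul_cancel₀ (neg_trace_pos hd hirr a).ne')
  conv_rhs =>
    enter [2]
    rw [neg_trace_eq hd hirr a]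
  rw [Finset.mul_sum]
  refine Finset.sum_congr rfl fun i _ => ?_
  rw [Qmat, Matrix.smul_apply, smul_eq_mul, mul_assoc]

/-- The first-passage renewal theorem for the renewal system of a scheme, with the row of `Q_σ` as
stationary vector. -/
lemma exists_scheme_solution {σ : MSScheme d n} (hd : d ≠ 0) (hirr : σ.Irreducible)
    (hinc : σ.Incommensurable) (i r : Fin n) :
    ∃ F : Fin n → ℝ → ℝ,
      (∀ j t, t ≤ 0 → F j t = if j = r then 1 else 0) ∧
      (∀ t, 0 < t → ∀ j, F j t = ∑ e : Σ k : Fin n, Fin (σ.numSub j k),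
        σ.beta j e.1 e.2 ^ d * F e.1 (t - Real.log (1 / σ.beta j e.1 e.2))) ∧
      Tendsto (F i) atTop (𝓝 (∑ h, Qmat σ i h *
        ∑ k : Fin (σ.numSub h r), σ.beta h r k ^ d * Real.log (1 / σ.beta h r k))) := by
  have : Nonempty (Fin n) := ⟨i⟩
  obtain ⟨F, h1, h2, h3⟩ := (σ.renewal hd).exists_solution_tendsto
    (MSScheme.exists_renewal_path hd hirr)
    (fun j ε hε => MSScheme.exists_close_loops hd hirr hinc j hε)
    (q := Qmat σ i) (fun h => (Qmat_pos hd hirr i h).le)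
    (Qmat_stationary σ hd i) (Qmat_normalized hd hirr i) r
  refine ⟨F, h1, h2, ?_⟩
  convert h3 i using 2
  refine Finset.sum_congr rfl fun h _ => ?_
  congr 1
  have h4 : ∑ e : Σ k : Fin n, Fin (σ.numSub h k), σ.beta h e.1 e.2 ^ d *
      (Real.log (1 / σ.beta h e.1 e.2) * if e.1 = r then 1 else 0) =
      ∑ k : Fin (σ.numSub h r), σ.beta h r k ^ d * Real.log (1 / σ.beta h r k) := by
    rw [Fintype.sum_sigma, Finset.sum_eq_single r]
    · simp
    · intro j _ hj
      simp [hj]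
    · simp
  exact h4.symm

end Scheme

/-! ### Kakutani sequences -/

section Kakutani

variable {d n : ℕ}

lemma sum_sdiff_add_sum {P Q : Finset (LTile d n)} (hQ : Q ⊆ P) (f : LTile d n → ℝ) :
    ∑ S ∈ P \ Q, f S + ∑ S ∈ Q, f S = ∑ S ∈ P, f S :=
  Finset.sum_sdiff hQ

lemma maxTiles_subset (P : Finset (LTile d n)) : maxTiles P ⊆ P := by
  classical
  exact Finset.filter_subset _ _

lemma IsPacking.exists_maxVol {P : Finset (LTile d n)} (hP : IsPacking P) (hne : P.Nonempty) :
    ∃ ℓ : ℝ, 0 < ℓ ∧ (maxTiles P).Nonempty ∧ (∀ S ∈ maxTiles P, S.vol = ℓ) ∧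
      ∀ S ∈ P, S ∉ maxTiles P → S.vol < ℓ := by
  have hcmp : ∀ S ∈ P, ∀ S' ∈ P, (volume S.carrier ≤ volume S'.carrier ↔ S.vol ≤ S'.vol) :=
    fun S hS S' hS' =>
      (ENNReal.toReal_le_toReal (hP.1 S hS).2.1.ne (hP.1 S' hS').2.1.ne).symm
  obtain ⟨S₀, hS₀, hmax⟩ := P.exists_max_image (fun S => S.vol) hne
  have hmem : ∀ S, S ∈ maxTiles P ↔ S ∈ P ∧ S₀.vol ≤ S.vol := by
    intro S
    classical
    rw [maxTiles, Finset.mem_filter]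
    refine and_congr_right fun hS => ⟨fun h => (hcmp _ hS₀ _ hS).1 (h S₀ hS₀), fun h S' hS' => ?_⟩
    exact (hcmp _ hS' _ hS).2 ((hmax S' hS').trans h)
  refine ⟨S₀.vol, (hP.1 S₀ hS₀).toReal_pos, ⟨S₀, (hmem S₀).2 ⟨hS₀, le_rfl⟩⟩, fun S hS => ?_,
    fun S hS hS' => ?_⟩
  · exact le_antisymm (hmax S ((hmem S).1 hS).1) ((hmem S).1 hS).2
  · by_contra h
    exact hS' ((hmem S).2 ⟨hS, not_lt.1 h⟩)

/-- Every prototile is cut into at least two pieces, as each piece has relative volume below one. -/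
lemma MSScheme.two_le_card_sub (σ : MSScheme d n) (hd : d ≠ 0) (i : Fin n) :
    (2 : ℝ) ≤ Fintype.card (Σ j : Fin n, Fin (σ.numSub i j)) := by
  have h1 := σ.sum_beta_pow hd i
  have hne : (Finset.univ : Finset (Σ j : Fin n, Fin (σ.numSub i j))).Nonempty :=
    Finset.nonempty_of_sum_ne_zero (f := fun e => σ.beta i e.1 e.2 ^ d) (by rw [h1]; simp)
  have h2 : ∑ e : Σ j : Fin n, Fin (σ.numSub i j), σ.beta i e.1 e.2 ^ d <
      ∑ _e : Σ j : Fin n, Fin (σ.numSub i j), (1 : ℝ) :=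
    Finset.sum_lt_sum_of_nonempty hne fun e _ =>
      pow_lt_one₀ (σ.beta_pos i e.1 e.2).le (σ.beta_lt_one i e.1 e.2) hd
  rw [h1, Finset.sum_const, nsmul_eq_mul, mul_one, Finset.card_univ] at h2
  have h3 : 1 < Fintype.card (Σ j : Fin n, Fin (σ.numSub i j)) := by exact_mod_cast h2
  exact_mod_cast h3

lemma MSScheme.exists_beta_pow_ge (σ : MSScheme d n) (hd : d ≠ 0) :
    ∃ ρ : ℝ, 0 < ρ ∧ ρ ≤ 1 ∧ ∀ i j k, ρ ≤ σ.beta i j k ^ d := by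
  obtain ⟨_, S, -, hS, h⟩ := (σ.renewal hd).exists_bounds
  refine ⟨Real.exp (-S) ^ d, by positivity,
    pow_le_one₀ (Real.exp_pos _).le (Real.exp_le_one_iff.2 (by linarith)), fun i j k => ?_⟩
  have h1 : Real.log (1 / σ.beta i j k) ≤ S := (h i (⟨j, k⟩ : Σ j, Fin (σ.numSub i j))).2
  have h2 : 0 < σ.beta i j k := σ.beta_pos i j k
  gcongr
  rw [one_div, Real.log_inv] at h1
  rw [← Real.le_log_iff_exp_le h2]
  linarith

/-- The facts about a Kakutani sequence `π` of the prototile `T i` used in the limit argument, where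
`ℓ m` is the largest volume of a tile of `π m`: each `π m` is a packing of total volume `vol T i`,
its tiles of maximal volume are those of volume `ℓ m`, and `π (m + 1)` arises by substituting
them. -/
structure KakutaniData (σ : MSScheme d n) (i : Fin n) (π : ℕ → Finset (LTile d n))
    (ℓ : ℕ → ℝ) : Prop where
  packing : ∀ m, IsPacking (π m)
  sum_vol : ∀ m, ∑ S ∈ π m, S.vol = (volume (σ.T i)).toReal
  pos : ∀ m, 0 < ℓ m
  nonempty : ∀ m, (maxTiles (π m)).Nonempty
  vol_eq : ∀ m, ∀ S ∈ maxTiles (π m), S.vol = ℓ m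
  vol_lt : ∀ m, ∀ S ∈ π m, S ∉ maxTiles (π m) → S.vol < ℓ m
  sum_step : ∀ m, ∀ g : Fin n → ℝ → ℝ, ∑ S ∈ π (m + 1), g S.type S.vol =
      ∑ S ∈ π m \ maxTiles (π m), g S.type S.vol +
      ∑ S ∈ maxTiles (π m), ∑ e : Σ j : Fin n, Fin (σ.numSub S.type j),
        g e.1 (σ.beta S.type e.1 e.2 ^ d * S.vol)
  mem_step : ∀ m, ∀ S ∈ π (m + 1), S ∈ π m \ maxTiles (π m) ∨
      ∃ S' ∈ maxTiles (π m), ∃ e : Σ j : Fin n, Fin (σ.numSub S'.type j),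
        S.vol = σ.beta S'.type e.1 e.2 ^ d * S'.vol

lemma IsKakutaniSeq.exists_data {σ : MSScheme d n} (hd : d ≠ 0) {i : Fin n}
    {π : ℕ → Finset (LTile d n)} (hπ : IsKakutaniSeq σ i π) : ∃ ℓ, KakutaniData σ i π ℓ := by
  have hpack : ∀ m, IsPacking (π m) ∧ ∑ S ∈ π m, S.vol = (volume (σ.T i)).toReal := by
    intro m
    induction m with
    | zero =>
      rw [hπ.1]
      refine ⟨⟨?_, ?_⟩, ?_⟩
      · intro S hS
        rw [Finset.mem_singleton.1 hS]
        exact (σ.tile i).isNice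
      · intro S hS S' hS' hne
        exact absurd ((Finset.mem_singleton.1 hS).trans (Finset.mem_singleton.1 hS').symm) hne
      · rw [Finset.sum_singleton]
        rfl
    | succ m ih =>
      obtain ⟨repl, hrepl, hstep⟩ := hπ.2 m
      obtain ⟨h1, h2, -⟩ := ih.1.step hd (maxTiles_subset _) hrepl
      rw [hstep]
      refine ⟨h1, ?_⟩
      rw [h2 fun _ v => v, ← ih.2, ← sum_sdiff_add_sum (maxTiles_subset (π m))]
      congr 1
      refine Finset.sum_congr rfl fun S _ => ?_
      rw [← Finset.sum_mul, σ.sum_beta_pow hd, one_mul]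
  have hne : ∀ m, (π m).Nonempty := fun m =>
    Finset.nonempty_of_sum_ne_zero (f := fun S => S.vol) (by
      rw [(hpack m).2]
      exact (σ.tile i).isNice.toReal_pos.ne')
  choose ℓ hpos hmax heq hlt using fun m => (hpack m).1.exists_maxVol (hne m)
  refine ⟨ℓ, fun m => (hpack m).1, fun m => (hpack m).2, hpos, hmax, heq, hlt, fun m => ?_,
    fun m => ?_⟩
  · obtain ⟨repl, hrepl, hstep⟩ := hπ.2 m
    rw [hstep]
    exact ((hpack m).1.step hd (maxTiles_subset _) hrepl).2.1
  · obtain ⟨repl, hrepl, hstep⟩ := hπ.2 m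
    rw [hstep]
    exact ((hpack m).1.step hd (maxTiles_subset _) hrepl).2.2

namespace KakutaniData

variable {σ : MSScheme d n} {i : Fin n} {π : ℕ → Finset (LTile d n)} {ℓ : ℕ → ℝ}

lemma vol_le (h : KakutaniData σ i π ℓ) (m : ℕ) {S : LTile d n} (hS : S ∈ π m) : S.vol ≤ ℓ m := by
  by_cases hS' : S ∈ maxTiles (π m)
  · exact (h.vol_eq m S hS').le
  · exact (h.vol_lt m S hS hS').le

lemma strictAnti (h : KakutaniData σ i π ℓ) (hd : d ≠ 0) : StrictAnti ℓ := by
  refine strictAnti_nat_of_succ_lt fun m => ?_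
  obtain ⟨S, hS⟩ := h.nonempty (m + 1)
  rw [← h.vol_eq (m + 1) S hS]
  rcases h.mem_step m S (maxTiles_subset _ hS) with h1 | ⟨S', hS', e, he⟩
  · exact h.vol_lt m S (Finset.mem_sdiff.1 h1).1 (Finset.mem_sdiff.1 h1).2
  · rw [he, h.vol_eq m S' hS']
    exact mul_lt_of_lt_one_left (h.pos m)
      (pow_lt_one₀ (σ.beta_pos _ _ _).le (σ.beta_lt_one _ _ _) hd)

/-- All tiles of `π m` have volume at least `ρ * ℓ m`, where `ρ` is a lower bound of the relative
volumes `β ^ d`. -/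
lemma le_vol (h : KakutaniData σ i π ℓ) (hd : d ≠ 0) {ρ : ℝ} (h0 : 0 < ρ) (h1 : ρ ≤ 1)
    (hρ : ∀ i j k, ρ ≤ σ.beta i j k ^ d)
    (hzero : ∀ S ∈ π 0, S.vol = ℓ 0) (m : ℕ) :
    ∀ S ∈ π m, ρ * ℓ m ≤ S.vol := by
  induction m with
  | zero =>
    intro S hS
    rw [hzero S hS]
    exact mul_le_of_le_one_left (h.pos 0).le h1
  | succ m ih =>
    intro S hS
    have hlt : ρ * ℓ (m + 1) ≤ ρ * ℓ m :=
      mul_le_mul_of_nonneg_left (h.strictAnti hd (Nat.lt_succ_self m)).le h0.le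
    refine hlt.trans ?_
    rcases h.mem_step m S hS with h1 | ⟨S', hS', e, he⟩
    · exact ih S (Finset.mem_sdiff.1 h1).1
    · rw [he, h.vol_eq m S' hS']
      exact mul_le_mul_of_nonneg_right (hρ _ _ _) (h.pos m).le

lemma card_ge (h : KakutaniData σ i π ℓ) (hd : d ≠ 0) (m : ℕ) : (m : ℝ) ≤ (π m).card := by
  induction m with
  | zero => simp
  | succ m ih =>
    have h1 := h.sum_step m (fun _ _ => 1)
    have h2 := sum_sdiff_add_sum (maxTiles_subset (π m)) (fun _ => 1)
    have h3 : ∑ S ∈ maxTiles (π m), (2 : ℝ) ≤ ∑ S ∈ maxTiles (π m),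
        ∑ _e : Σ j : Fin n, Fin (σ.numSub S.type j), (1 : ℝ) :=
      Finset.sum_le_sum fun S _ => by
        rw [Finset.sum_const, nsmul_eq_mul, mul_one, Finset.card_univ]
        exact σ.two_le_card_sub hd S.type
    have h4 : (1 : ℝ) ≤ (maxTiles (π m)).card := by
      exact_mod_cast Finset.card_pos.2 (h.nonempty m)
    simp only [Finset.sum_const, nsmul_eq_mul, mul_one] at h1 h2 h3
    push_cast
    linarith

/-- The level `t_m = log (vol T i / ℓ m) / d` tends to infinity: `π m` has at least `m` tiles, all of
volume at least `ρ * ℓ m`, so `m * ρ * ℓ m ≤ vol T i`. -/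
lemma tendsto_time (h : KakutaniData σ i π ℓ) (hd : d ≠ 0) (hzero : ∀ S ∈ π 0, S.vol = ℓ 0) :
    Tendsto (fun m => Real.log ((volume (σ.T i)).toReal / ℓ m) / d) atTop atTop := by
  obtain ⟨ρ, h0, h1, hρ⟩ := σ.exists_beta_pow_ge hd
  have hd' : (0 : ℝ) < d := by exact_mod_cast Nat.pos_of_ne_zero hd
  have hlow : Tendsto (fun m : ℕ => Real.log (ρ * m) / d) atTop atTop :=
    (Real.tendsto_log_atTop.comp
      (tendsto_natCast_atTop_atTop.const_mul_atTop h0)).atTop_div_const hd'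
  refine tendsto_atTop_mono' _ ?_ hlow
  filter_upwards [eventually_gt_atTop 0] with m hm
  have hm' : (0 : ℝ) < m := by exact_mod_cast hm
  have hV := (σ.tile i).isNice.toReal_pos
  have hsum : ((π m).card : ℝ) * (ρ * ℓ m) ≤ (volume (σ.T i)).toReal := by
    rw [← h.sum_vol m, ← nsmul_eq_mul]
    exact Finset.card_nsmul_le_sum _ _ _ (h.le_vol hd h0 h1 hρ hzero m)
  have hle : (m : ℝ) * (ρ * ℓ m) ≤ (volume (σ.T i)).toReal :=
    (mul_le_mul_of_nonneg_right (h.card_ge hd m) (mul_pos h0 (h.pos m)).le).trans hsum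
  have : ρ * m ≤ (volume (σ.T i)).toReal / ℓ m := by
    rw [le_div_iff₀ (h.pos m)]
    linarith
  have := Real.log_le_log (by positivity) this
  gcongr

/-- For a solution `F` of the renewal equation and a fixed `m`, the sum of
`S.vol * F S.type (log (S.vol / ℓ m) / d)` over the tiles of `π m'` does not depend on `m' ≤ m`: each
step before `m` substitutes tiles of volume larger than `ℓ m`, and the renewal equation at the
positive time of such a tile says that its pieces contribute as much as the tile did. -/
lemma sum_weighted (h : KakutaniData σ i π ℓ) (hd : d ≠ 0) {F : Fin n → ℝ → ℝ}
    (hF : ∀ t, 0 < t → ∀ j, F j t = ∑ e : Σ k : Fin n, Fin (σ.numSub j k),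
      σ.beta j e.1 e.2 ^ d * F e.1 (t - Real.log (1 / σ.beta j e.1 e.2)))
    (m m' : ℕ) (hm : m' ≤ m) :
    ∑ S ∈ π m', S.vol * F S.type (Real.log (S.vol / ℓ m) / d) =
      ∑ S ∈ π 0, S.vol * F S.type (Real.log (S.vol / ℓ m) / d) := by
  induction m' with
  | zero => rfl
  | succ m' ih =>
    have hd' : (0 : ℝ) < d := by exact_mod_cast Nat.pos_of_ne_zero hd
    rw [← ih (by omega), h.sum_step m' (fun j v => v * F j (Real.log (v / ℓ m) / d)),
      ← sum_sdiff_add_sum (maxTiles_subset (π m'))]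
    congr 1
    refine Finset.sum_congr rfl fun S hS => ?_
    have hv : ℓ m < S.vol := by
      rw [h.vol_eq m' S hS]
      exact h.strictAnti hd (by omega)
    have hℓ := h.pos m
    have hv0 : 0 < S.vol := hℓ.trans hv
    have ht : 0 < Real.log (S.vol / ℓ m) / d :=
      div_pos (Real.log_pos ((one_lt_div hℓ).2 hv)) hd'
    rw [hF _ ht, Finset.mul_sum]
    refine Finset.sum_congr rfl fun e _ => ?_
    have hb : 0 < σ.beta S.type e.1 e.2 := σ.beta_pos _ _ _
    have harg : Real.log (σ.beta S.type e.1 e.2 ^ d * S.vol / ℓ m) / d =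
        Real.log (S.vol / ℓ m) / d - Real.log (1 / σ.beta S.type e.1 e.2) := by
      rw [mul_div_assoc, Real.log_mul (by positivity) (by positivity), Real.log_pow, one_div,
        Real.log_inv]
      field_simp
      ring
    rw [harg]
    ring

end KakutaniData

end Kakutani

/-- **Theorem 1.11 (3).** For an irreducible incommensurable multiscale substitution
scheme, the matrix `Q_σ` has positive entries and equal rows, and in any Kakutani
sequence of partitions of `T i`, the volume of the region covered by tiles of type `r`
in `π_m` converges to `vol T_i · Σ_h q_h Σ_k ((β_hr^(k))^d · log (1/β_hr^(k)))`. -/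
theorem type_volume_kakutani {d n : ℕ} (σ : MSScheme d n)
    (hirr : σ.Irreducible) (hinc : σ.Incommensurable) (i : Fin n)
    (π : ℕ → Finset (LTile d n)) (hπ : IsKakutaniSeq σ i π) (r : Fin n) :
    (∀ a b : Fin n, 0 < Qmat σ a b) ∧
    (∀ a b c : Fin n, Qmat σ a c = Qmat σ b c) ∧
    Tendsto (fun m => (volume (typeUnion (π m) r)).toReal) atTop
      (𝓝 ((volume (σ.T i)).toReal *
          ∑ h : Fin n, Qmat σ i h *
            ∑ k : Fin (σ.numSub h r), σ.beta h r k ^ d * Real.log (1 / σ.beta h r k))) := by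
  have hd := hinc.dim_ne_zero
  refine ⟨Qmat_pos hd hirr, Qmat_row_eq hd hirr, ?_⟩
  obtain ⟨F, hF0, hF, hlim⟩ := exists_scheme_solution hd hirr hinc i r
  obtain ⟨ℓ, hK⟩ := hπ.exists_data hd
  have hzero : ∀ S ∈ π 0, S.vol = ℓ 0 := by
    intro S hS
    obtain ⟨S', hS'⟩ := hK.nonempty 0
    have h1 := maxTiles_subset _ hS'
    rw [← hK.vol_eq 0 S' hS']
    rw [hπ.1, Finset.mem_singleton] at hS h1
    rw [hS, h1]
  have hvol : ∀ m, (volume (typeUnion (π m) r)).toReal =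
      (volume (σ.T i)).toReal * F i (Real.log ((volume (σ.T i)).toReal / ℓ m) / d) := by
    intro m
    have h1 := hK.sum_weighted hd hF m m le_rfl
    rw [hπ.1, Finset.sum_singleton] at h1
    rw [(hK.packing m).volume_typeUnion r]
    refine Eq.trans ?_ h1
    refine Finset.sum_congr rfl fun S hS => ?_
    -- Every tile of `π m` has volume at most `ℓ m`, so `F` is evaluated at nonpositive times.
    have htime : Real.log (S.vol / ℓ m) / d ≤ 0 :=
      div_nonpos_of_nonpos_of_nonneg (Real.log_nonpos
        (div_nonneg ENNReal.toReal_nonneg (hK.pos m).le)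
        (div_le_one_of_le₀ (hK.vol_le m hS) (hK.pos m).le)) (Nat.cast_nonneg d)
    rw [hF0 _ _ htime]
  simp only [hvol]
  exact (hlim.comp (hK.tendsto_time hd hzero)).const_mul _
end

section
/- Let G be a finite directed weighted multigraph: a finite vertex set V, a finite edge set E with source and target maps s, t : E → V, and a length function ℓ : E → (0,∞); the length of a path (a finite nonempty sequence of composable edges) is the sum of the lengths of its edges, and a path is closed if its initial and terminal vertices coincide. Assume G is strongly connected: for every ordered pair of vertices there is a path from the first to the second. Then the following are equivalent: (i) there exist closed paths γ_1, γ_2 in G such that ℓ(γ_1)/ℓ(γ_2) is irrational; (ii) the set {ℓ(γ) : γ a closed path in G} is not uniformly discrete in ℝ, i.e. for every ρ > 0 there exist closed paths γ, γ′ with ℓ(γ) ≠ ℓ(γ′) and |ℓ(γ) − ℓ(γ′)| < ρ. -/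
/-!
Incommensurable implies not uniformly discrete: if closed paths `γ₁`, `γ₂` have lengths `a`, `b`
with `a / b` irrational, join their base points by paths in both directions, of total length `c`.
Inserting iterates of `γ₁` or `γ₂` into this loop shows that `c + k a` and `c + n b` are closed
path lengths for all natural `k`, `n`. By Dirichlet's approximation theorem `k a - n b` can be
made arbitrarily small, and it is nonzero for `k > 0` by irrationality.

Conversely, suppose all ratios of closed path lengths are rational, and fix one closed path of
length `b` based at `v₀`. Let `φ v` be the length of a chosen path from `v₀` to `v`. For each edge
`x`, the defect `φ (s x) + ℓ x - φ (t x)` is a difference of two closed path lengths (complete both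
paths from `v₀` to `t x` by the same way back), hence a rational multiple of `b`. There are finitely
many edges, so a common denominator `N` serves all of them. Telescoping along a closed path
(`IsWalkLength.defect`) shows that every closed path length lies in `(b / N) ℤ`, which is uniformly
discrete.
-/

/-- `IsPathFrom s t u v m e` : the edges `e 0, …, e m` form a directed path from the
vertex `u` to the vertex `v` in the directed multigraph with source map `s` and target
map `t`: consecutive edges are composable, the first starts at `u` and the last ends
at `v`. (Every path is a nonempty sequence of edges.) -/
def IsPathFrom {V E : Type*} (s t : E → V) (u v : V) (m : ℕ) (e : Fin (m + 1) → E) :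
    Prop :=
  s (e 0) = u ∧ t (e (Fin.last m)) = v ∧
    ∀ k : Fin m, t (e k.castSucc) = s (e k.succ)

/-- `IsClosedPathLength s t ℓ a` : some closed path in the graph has total length `a`,
the length of a path being the sum of the lengths of its edges. -/
def IsClosedPathLength {V E : Type*} (s t : E → V) (ℓ : E → ℝ) (a : ℝ) : Prop :=
  ∃ (v : V) (m : ℕ) (e : Fin (m + 1) → E),
    IsPathFrom s t v v m e ∧ a = ∑ k : Fin (m + 1), ℓ (e k)

/-- `IsWalkLength s t ℓ u v a`: some nonempty directed path from `u` to `v` has length `a`.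
The inductive form, adding edges at the front, replaces the `Fin`-indexed `IsPathFrom`. -/
inductive IsWalkLength {V E : Type*} (s t : E → V) (ℓ : E → ℝ) : V → V → ℝ → Prop
  | single (x : E) : IsWalkLength s t ℓ (s x) (t x) (ℓ x)
  | cons (x : E) {w : V} {b : ℝ} (h : IsWalkLength s t ℓ (t x) w b) :
      IsWalkLength s t ℓ (s x) w (ℓ x + b)

namespace IsWalkLength

variable {V E : Type*} {s t : E → V} {ℓ : E → ℝ}

theorem of_isPathFrom {m : ℕ} : ∀ {u v : V} {e : Fin (m + 1) → E},
    IsPathFrom s t u v m e → IsWalkLength s t ℓ u v (∑ k, ℓ (e k)) := by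
  induction m with
  | zero =>
    rintro u v e ⟨rfl, rfl, -⟩
    simpa using single (s := s) (t := t) (ℓ := ℓ) (e 0)
  | succ m ih =>
    rintro u v e ⟨rfl, rfl, h⟩
    rw [Fin.sum_univ_succ]
    refine cons _ (ih ⟨?_, ?_, ?_⟩)
    · exact (h 0).symm
    · rfl
    · intro k
      exact h k.succ

theorem exists_isPathFrom {u v : V} {a : ℝ} (h : IsWalkLength s t ℓ u v a) :
    ∃ (m : ℕ) (e : Fin (m + 1) → E), IsPathFrom s t u v m e ∧ a = ∑ k, ℓ (e k) := by
  induction h with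
  | single x => exact ⟨0, fun _ => x, ⟨rfl, rfl, fun k => k.elim0⟩, by simp⟩
  | cons x h ih =>
    obtain ⟨m, e, ⟨h0, h1, h2⟩, rfl⟩ := ih
    refine ⟨m + 1, Fin.cons x e, ⟨rfl, ?_, ?_⟩, ?_⟩
    · rw [← Fin.succ_last, Fin.cons_succ, h1]
    · intro k
      cases k using Fin.cases with
      | zero => simpa using h0.symm
      | succ j => simpa [Fin.castSucc_succ] using h2 j
    · exact (Fin.sum_univ_succ fun k => ℓ ((Fin.cons x e : Fin (m + 1 + 1) → E) k)).symm

theorem isClosedPathLength_iff {a : ℝ} :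
    IsClosedPathLength s t ℓ a ↔ ∃ v, IsWalkLength s t ℓ v v a := by
  constructor
  · rintro ⟨v, m, e, h, rfl⟩
    exact ⟨v, of_isPathFrom h⟩
  · rintro ⟨v, h⟩
    exact ⟨v, h.exists_isPathFrom⟩

theorem append {u v w : V} {a b : ℝ} (h : IsWalkLength s t ℓ u v a)
    (h' : IsWalkLength s t ℓ v w b) : IsWalkLength s t ℓ u w (a + b) := by
  induction h with
  | single x => exact cons x h'
  | cons x h ih =>
    rw [add_assoc]
    exact cons x (ih h')

theorem append_iterate {u v : V} {a c : ℝ} (h : IsWalkLength s t ℓ u u a)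
    (h' : IsWalkLength s t ℓ u v c) (k : ℕ) : IsWalkLength s t ℓ u v (c + k * a) := by
  induction k with
  | zero => simpa using h'
  | succ k ih =>
    convert h.append ih using 1
    push_cast
    ring

theorem pos (hpos : ∀ e, 0 < ℓ e) {u v : V} {a : ℝ} (h : IsWalkLength s t ℓ u v a) : 0 < a := by
  induction h with
  | single x => exact hpos x
  | cons x h ih => exact add_pos (hpos x) ih

/-- Telescoping: if the defect of a potential `φ` along every edge lies in a subgroup, so does its
defect along every path. On a closed path the potential cancels and the defect is the length. -/
theorem defect (φ : V → ℝ) (H : AddSubgroup ℝ) (hφ : ∀ x, φ (s x) + ℓ x - φ (t x) ∈ H)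
    {u v : V} {a : ℝ} (h : IsWalkLength s t ℓ u v a) : φ u + a - φ v ∈ H := by
  induction h with
  | single x => exact hφ x
  | cons x h ih =>
    convert H.add_mem (hφ x) ih using 1
    ring

end IsWalkLength

/-- Dirichlet's approximation theorem for a ratio of positive reals, in homogeneous form. -/
theorem exists_nat_mul_sub_nat_mul_lt {a b ρ : ℝ} (ha : 0 < a) (hb : 0 < b) (hρ : 0 < ρ) :
    ∃ k n : ℕ, 0 < k ∧ |k * a - n * b| < ρ := by
  obtain ⟨M, hM⟩ := exists_nat_gt (b / ρ)
  have hM0 : 0 < M := by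
    have : (0 : ℝ) < M := (div_pos hb hρ).trans hM
    exact_mod_cast this
  obtain ⟨k, hk, -, h⟩ := Real.exists_nat_abs_mul_sub_round_le (a / b) hM0
  have hr : 0 ≤ round ((k : ℝ) * (a / b)) := by
    rw [round_eq]
    positivity
  obtain ⟨n, hn⟩ := Int.eq_ofNat_of_zero_le hr
  refine ⟨k, n, hk, ?_⟩
  rw [hn] at h
  have e : (k : ℝ) * a - n * b = (k * (a / b) - ((n : ℤ) : ℝ)) * b := by
    push_cast
    field_simp
  rw [e, abs_mul, abs_of_pos hb]
  calc _ ≤ 1 / ((M : ℝ) + 1) * b := by gcongr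
    _ < ρ := by
      rw [div_lt_iff₀ hρ] at hM
      rw [one_div_mul_eq_div, div_lt_iff₀ (by positivity)]
      nlinarith

/-- **Lemma 4.15.** Let `G` be a finite strongly connected directed multigraph with
positive edge lengths. Then `G` is incommensurable (there are two closed paths whose
lengths have irrational ratio) if and only if the set of lengths of closed paths of
`G` is not uniformly discrete in `ℝ`. -/
theorem incommensurable_iff_not_uniformly_discrete
    {V E : Type*} [Fintype V] [Fintype E] (s t : E → V) (ℓ : E → ℝ)
    (hpos : ∀ e, 0 < ℓ e)
    (hconn : ∀ u v : V, ∃ (m : ℕ) (e : Fin (m + 1) → E), IsPathFrom s t u v m e) :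
    (∃ a b : ℝ, IsClosedPathLength s t ℓ a ∧ IsClosedPathLength s t ℓ b ∧
      Irrational (a / b)) ↔
    (∀ ρ > (0 : ℝ), ∃ a b : ℝ, IsClosedPathLength s t ℓ a ∧
      IsClosedPathLength s t ℓ b ∧ a ≠ b ∧ |a - b| < ρ) := by
  simp only [IsWalkLength.isClosedPathLength_iff]
  have hconn' : ∀ u v : V, ∃ a, IsWalkLength s t ℓ u v a := fun u v => by
    obtain ⟨m, e, h⟩ := hconn u v
    exact ⟨_, .of_isPathFrom h⟩
  constructor
  · rintro ⟨a, b, ⟨u, ha⟩, ⟨v, hb⟩, hirr⟩ ρ hρ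
    obtain ⟨p, hp⟩ := hconn' u v
    obtain ⟨q, hq⟩ := hconn' v u
    have hb0 := hb.pos hpos
    obtain ⟨k, n, hk, hkn⟩ := exists_nat_mul_sub_nat_mul_lt (ha.pos hpos) hb0 hρ
    refine ⟨(p + q) + k * a, (q + p) + n * b, ⟨u, ha.append_iterate (hp.append hq) k⟩,
      ⟨v, hb.append_iterate (hq.append hp) n⟩, ?_, ?_⟩
    · intro heq
      refine hirr ⟨n / k, ?_⟩
      have hk' : (k : ℝ) ≠ 0 := by positivity
      push_cast
      rw [div_eq_div_iff hk' hb0.ne']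
      linarith
    · convert hkn using 2
      ring
  · intro hdisc
    by_contra hcomm
    obtain ⟨b, -, ⟨v₀, hb⟩, -⟩ := hdisc 1 one_pos
    have hb0 := hb.pos hpos
    have hrat : ∀ a v, IsWalkLength s t ℓ v v a → ∃ r : ℚ, a = r * b := by
      intro a v ha
      have h : ¬ Irrational (a / b) := fun h => hcomm ⟨a, b, ⟨v, ha⟩, ⟨v₀, hb⟩, h⟩
      obtain ⟨r, hr⟩ := not_not.mp h
      exact ⟨r, by rw [hr, div_mul_cancel₀ _ hb0.ne']⟩
    choose φ hφ using hconn' v₀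
    have hedge : ∀ x, ∃ r : ℚ, φ (s x) + ℓ x - φ (t x) = r * b := by
      intro x
      obtain ⟨q, hq⟩ := hconn' (t x) v₀
      obtain ⟨r₁, h₁⟩ := hrat _ _ (((hφ (s x)).append (.single x)).append hq)
      obtain ⟨r₂, h₂⟩ := hrat _ _ ((hφ (t x)).append hq)
      refine ⟨r₁ - r₂, ?_⟩
      push_cast
      linarith
    choose r hr using hedge
    let N : ℕ := ∏ x, (r x).den
    have hN : (0 : ℝ) < N := by
      exact_mod_cast Finset.prod_pos fun x _ => (r x).den_pos
    have hedgeN : ∀ x, φ (s x) + ℓ x - φ (t x) ∈ AddSubgroup.zmultiples (b / N) := by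
      intro x
      obtain ⟨d, hd⟩ : (r x).den ∣ N := Finset.dvd_prod_of_mem _ (Finset.mem_univ x)
      refine AddSubgroup.mem_zmultiples_iff.mpr ⟨(r x).num * d, ?_⟩
      have hden : ((r x).den : ℝ) ≠ 0 := by exact_mod_cast (r x).den_ne_zero
      have hd' : (N : ℝ) = (r x).den * d := by exact_mod_cast hd
      have hd0 : (d : ℝ) ≠ 0 := by
        intro h
        simp [hd', h] at hN
      rw [hr, hd', zsmul_eq_mul, Rat.cast_def]
      push_cast
      field_simp
    have hlattice : ∀ a v, IsWalkLength s t ℓ v v a → ∃ z : ℤ, a = z * (b / N) := by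
      intro a v ha
      obtain ⟨z, hz⟩ := AddSubgroup.mem_zmultiples_iff.mp (ha.defect φ _ hedgeN)
      refine ⟨z, ?_⟩
      rw [zsmul_eq_mul] at hz
      linarith
    have hδ : 0 < b / N := div_pos hb0 hN
    obtain ⟨a, a', ⟨v, ha⟩, ⟨v', ha'⟩, hne, hlt⟩ := hdisc (b / N) hδ
    obtain ⟨z, rfl⟩ := hlattice a v ha
    obtain ⟨z', rfl⟩ := hlattice a' v' ha'
    rw [← sub_mul, abs_mul, abs_of_pos hδ, mul_lt_iff_lt_one_left hδ] at hlt
    have hz : |z - z'| < 1 := by exact_mod_cast hlt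
    rw [Int.abs_lt_one_iff, sub_eq_zero] at hz
    exact hne (by rw [hz])
end
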